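/- arXiv:2501.01654 — 4 statements merged into one kernel-verified Lean document; each statement's English description precedes it below -/
import Mathlib

section
/- Ω = {id} ∪ {ω_j : α_j minuscule}, where ω_j = t_{ϖ_j^∨} ∘ v_j; moreover A ∩ P^∨ = {0} ∪ {ϖ_j^∨ : α_j minuscule}, and Ω acts simply transitively on A ∩ P^∨: for any p, q ∈ A ∩ P^∨ there is a unique ω ∈ Ω with ω(p) = q. -/
/-!
The points of `A ∩ P^∨` are found by arithmetic: a point `x` of it has integers
`kᵢ = (αᵢ, x) ≥ 0` with `∑ mᵢ kᵢ ≤ 1`, so at most one `kᵢ` is nonzero, and then `kᵢ = mᵢ = 1`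
(`alcove_inter`).

Everything else rests on the simple transitivity of `W` on chambers. Freeness (`weyl_free`) is
obtained from the exchange property for words in simple reflections, once these are known to
generate `W`. Transitivity (`weyl_trans`) is obtained by maximizing `(ρ, w y)` over the finite
group `W`, where `ρ` is the sum of the fundamental coweights, so that `(ρ, β)` is the height of
`β`.

Put `h = 1 + (ρ, α₀)`. The point `ρ / h` is interior to `A`, so an element of `W` preserving `A`
keeps all simple roots positive and is trivial; hence the stabilizer of `0` in `Ω` is trivial
(`fund_zero`). For `α_j` minuscule, `ρ - h ϖ_j` is regular, lies in `P^∨`, and takes the value `1`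
on each element of `{-α₀} ∪ (Π ∖ {α_j})`. If `w ∈ W` makes it dominant, then its image
`w (ρ - h ϖ_j)` takes integer values `≥ 1` on `Π` and the value `1` on the image of this set, which
therefore consists of simple roots and is all of `Π`; so `v_j = w⁻¹` exists (`exists_v`). As `-α_j = -α₀ + ∑_{i ≠ j} mᵢ αᵢ`, the root `v_j⁻¹(-α_j)`
has the same height as `α₀`, hence equals `α₀`, and `t_{ϖ_j} ∘ v_j` permutes the inequalities
defining `A` (`omega_alcove`).

Thus `Ω` acts on `A ∩ P^∨` with the orbit of `0` equal to the whole set and with trivial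
stabilizer of `0`; both the description of `Ω` and the simple transitivity follow.
-/

open scoped RealInnerProductSpace

open scoped RealInnerProductSpace

/-- The reflection `s_a` in the hyperplane orthogonal to `a`. -/
noncomputable def reflMap {V : Type*} [NormedAddCommGroup V] [InnerProductSpace ℝ V]
    (a x : V) : V :=
  x - (2 * ⟪a, x⟫ / ⟪a, a⟫) • a

/-- A reduced irreducible crystallographic root system in `V`. -/
structure IsRootSystem {V : Type*} [NormedAddCommGroup V] [InnerProductSpace ℝ V]
    (Φ : Set V) : Prop where
  finite : Φ.Finite
  spans : Submodule.span ℝ Φ = ⊤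
  not_zero : (0 : V) ∉ Φ
  reduced : ∀ a ∈ Φ, ∀ t : ℝ, t • a ∈ Φ → t = 1 ∨ t = -1
  refl_mem : ∀ a ∈ Φ, ∀ b ∈ Φ, reflMap a b ∈ Φ
  crystallographic : ∀ a ∈ Φ, ∀ b ∈ Φ, ∃ k : ℤ, 2 * ⟪a, b⟫ / ⟪a, a⟫ = (k : ℝ)
  irreducible : ¬ ∃ Φ₁ Φ₂ : Set V, Φ₁.Nonempty ∧ Φ₂.Nonempty ∧ Φ₁ ∪ Φ₂ = Φ ∧
    ∀ a ∈ Φ₁, ∀ b ∈ Φ₂, ⟪a, b⟫ = 0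

/-- `α : Fin n → V` is a base (system of simple roots) of `Φ`. -/
structure IsBase {V : Type*} [NormedAddCommGroup V] [InnerProductSpace ℝ V]
    (Φ : Set V) {n : ℕ} (α : Fin n → V) : Prop where
  mem : ∀ i, α i ∈ Φ
  indep : LinearIndependent ℝ α
  spans : Submodule.span ℝ (Set.range α) = ⊤
  int_comb : ∀ β ∈ Φ, ∃ c : Fin n → ℤ,
    β = ∑ i, (c i : ℝ) • α i ∧ ((∀ i, 0 ≤ c i) ∨ (∀ i, c i ≤ 0))

/-- `α₀ = ∑ mᵢ αᵢ` is the highest root of `Φ` w.r.t. the base `α`. -/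
structure IsHighestRoot {V : Type*} [NormedAddCommGroup V] [InnerProductSpace ℝ V]
    (Φ : Set V) {n : ℕ} (α : Fin n → V) (m : Fin n → ℕ) (α₀ : V) : Prop where
  pos : ∀ i, 0 < m i
  mem : α₀ ∈ Φ
  eq : α₀ = ∑ i, (m i : ℝ) • α i
  highest : ∀ β ∈ Φ, ∀ c : Fin n → ℤ, β = ∑ i, (c i : ℝ) • α i → ∀ i, c i ≤ (m i : ℤ)

/-- The Weyl group of `Φ`, generated by the reflections in the roots. -/
noncomputable def WeylGroup {V : Type*} [NormedAddCommGroup V] [InnerProductSpace ℝ V]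
    (Φ : Set V) : Subgroup (V ≃ₗᵢ[ℝ] V) :=
  Subgroup.closure {w : V ≃ₗᵢ[ℝ] V | ∃ a ∈ Φ, ∀ x, w x = reflMap a x}

/-- The fundamental alcove. -/
def alcove {V : Type*} [NormedAddCommGroup V] [InnerProductSpace ℝ V]
    {n : ℕ} (α : Fin n → V) (α₀ : V) : Set V :=
  {x | (∀ i, 0 ≤ ⟪α i, x⟫) ∧ ⟪α₀, x⟫ ≤ 1}

/-- The coweight lattice `P^∨`. -/
def coweightLattice {V : Type*} [NormedAddCommGroup V] [InnerProductSpace ℝ V]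
    (Φ : Set V) : Set V :=
  {ω | ∀ a ∈ Φ, ∃ k : ℤ, ⟪ω, a⟫ = (k : ℝ)}

/-- The coroot lattice `Q^∨`: the `ℤ`-span of the coroots. -/
def corootLattice {V : Type*} [NormedAddCommGroup V] [InnerProductSpace ℝ V]
    (Φ : Set V) : Set V :=
  (Submodule.span ℤ ((fun a : V => (2 / ⟪a, a⟫) • a) '' Φ) : Set V)

/-- The extended affine Weyl group `W_ext = {t_γ ∘ w : γ ∈ P^∨, w ∈ W}` inside `E(V)`. -/
noncomputable def extendedWeylGroup {V : Type*} [NormedAddCommGroup V] [InnerProductSpace ℝ V]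
    (Φ : Set V) : Set (V ≃ᵃⁱ[ℝ] V) :=
  {ζ | ∃ γ ∈ coweightLattice Φ, ∃ w ∈ WeylGroup Φ, ∀ x, ζ x = w x + γ}

/-- The affine Weyl group `W_aff = {t_γ ∘ w : γ ∈ Q^∨, w ∈ W}` inside `E(V)`. -/
noncomputable def affineWeylGroup {V : Type*} [NormedAddCommGroup V] [InnerProductSpace ℝ V]
    (Φ : Set V) : Set (V ≃ᵃⁱ[ℝ] V) :=
  {ζ | ∃ γ ∈ corootLattice Φ, ∃ w ∈ WeylGroup Φ, ∀ x, ζ x = w x + γ}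

/-- The fundamental group `Ω`: the stabilizer of the alcove in `W_ext`. -/
noncomputable def fundGroup {V : Type*} [NormedAddCommGroup V] [InnerProductSpace ℝ V]
    (Φ : Set V) {n : ℕ} (α : Fin n → V) (α₀ : V) : Set (V ≃ᵃⁱ[ℝ] V) :=
  {ζ | ζ ∈ extendedWeylGroup Φ ∧ ζ '' alcove α α₀ = alcove α α₀}

/-- The Komrakov–Premet polytope. -/
def kpPolytope {V : Type*} [NormedAddCommGroup V] [InnerProductSpace ℝ V]
    {n : ℕ} (α : Fin n → V) (m : Fin n → ℕ) (α₀ : V) : Set V :=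
  {x ∈ alcove α α₀ | ∀ j, m j = 1 → ⟪α₀ + α j, x⟫ ≤ 1}

namespace AlcoveStab

variable {V : Type*} [NormedAddCommGroup V] [InnerProductSpace ℝ V]

/-! ### Reflections and the Weyl group -/

/-- The reflection in the hyperplane `aᗮ`, as a linear isometry; its values are those of
`reflMap a`. -/
noncomputable def refl (a : V) : V ≃ₗᵢ[ℝ] V := (Submodule.span ℝ {a})ᗮ.reflection

lemma refl_apply (a x : V) : refl a x = reflMap a x := by
  rw [refl, Submodule.reflection_orthogonal_apply, Submodule.reflection_singleton_apply, reflMap,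
    real_inner_self_eq_norm_sq]
  simp only [RCLike.ofReal_real_eq_id, id_eq, mul_div_assoc]
  module

lemma reflMap_self {a : V} (ha : a ≠ 0) : reflMap a a = -a := by
  have : ⟪a, a⟫ ≠ 0 := inner_self_ne_zero.2 ha
  rw [reflMap, mul_div_assoc, div_self this]
  module

lemma refl_mul_self (a : V) : refl a * refl a = 1 := Submodule.reflection_mul_reflection _

lemma refl_neg (a : V) : refl (-a) = refl a := by
  ext x
  simp only [refl_apply, reflMap, inner_neg_left, inner_neg_right, neg_neg, mul_neg, neg_div,
    neg_smul, smul_neg]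

lemma refl_conj (w : V ≃ₗᵢ[ℝ] V) (a : V) : refl (w a) = w * refl a * w⁻¹ := by
  ext x
  have h : ⟪w a, x⟫ = ⟪a, w⁻¹ x⟫ := by
    rw [← w.inner_map_map a]
    congr 1
    exact (w.apply_symm_apply x).symm
  have h2 : w (w⁻¹ x) = x := w.apply_symm_apply x
  simp only [refl_apply, reflMap, LinearIsometryEquiv.coe_mul, Function.comp_apply, map_sub,
    map_smul, h, h2, w.inner_map_map]

lemma inner_map_left (w : V ≃ₗᵢ[ℝ] V) (x y : V) : ⟪w x, y⟫ = ⟪x, w⁻¹ y⟫ := by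
  rw [← w.inner_map_map x]
  congr 1
  exact (w.apply_symm_apply y).symm

lemma inner_inv_left (w : V ≃ₗᵢ[ℝ] V) (x y : V) : ⟪w⁻¹ x, y⟫ = ⟪x, w y⟫ := by
  rw [inner_map_left, inv_inv]

variable {Φ : Set V}

lemma neg_mem (hΦ : IsRootSystem Φ) {a : V} (ha : a ∈ Φ) : -a ∈ Φ := by
  have h := hΦ.refl_mem a ha a ha
  rwa [reflMap_self (fun h => hΦ.not_zero (h ▸ ha))] at h

lemma refl_mem_weyl {a : V} (ha : a ∈ Φ) : refl a ∈ WeylGroup Φ :=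
  Subgroup.subset_closure ⟨a, ha, refl_apply a⟩

lemma weyl_mem_both (hΦ : IsRootSystem Φ) {w : V ≃ₗᵢ[ℝ] V} (hw : w ∈ WeylGroup Φ) :
    (∀ b ∈ Φ, w b ∈ Φ) ∧ (∀ b ∈ Φ, w⁻¹ b ∈ Φ) := by
  induction hw using Subgroup.closure_induction with
  | mem x hx =>
    obtain ⟨a, ha, hx⟩ := hx
    have : x = refl a := by ext y; rw [hx, refl_apply]
    subst this
    rw [inv_eq_of_mul_eq_one_left (refl_mul_self a)]
    exact ⟨fun b hb => hx b ▸ hΦ.refl_mem a ha b hb, fun b hb => hx b ▸ hΦ.refl_mem a ha b hb⟩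
  | one => simp
  | mul x y _ _ h1 h2 =>
    refine ⟨fun b hb => h1.1 _ (h2.1 _ hb), fun b hb => ?_⟩
    rw [mul_inv_rev]
    exact h2.2 _ (h1.2 _ hb)
  | inv x _ h => exact ⟨h.2, by simpa using h.1⟩

lemma weyl_mem (hΦ : IsRootSystem Φ) {w : V ≃ₗᵢ[ℝ] V} (hw : w ∈ WeylGroup Φ) {b : V}
    (hb : b ∈ Φ) : w b ∈ Φ := (weyl_mem_both hΦ hw).1 b hb

lemma weyl_coweight (hΦ : IsRootSystem Φ) {w : V ≃ₗᵢ[ℝ] V} (hw : w ∈ WeylGroup Φ) {x : V}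
    (hx : x ∈ coweightLattice Φ) : w x ∈ coweightLattice Φ := fun a ha => by
  rw [inner_map_left]
  exact hx _ (weyl_mem hΦ (inv_mem hw) ha)

lemma add_coweight {x y : V} (hx : x ∈ coweightLattice Φ) (hy : y ∈ coweightLattice Φ) :
    x + y ∈ coweightLattice Φ := fun a ha => by
  obtain ⟨k, hk⟩ := hx a ha
  obtain ⟨l, hl⟩ := hy a ha
  exact ⟨k + l, by rw [inner_add_left, hk, hl]; push_cast; rfl⟩

lemma neg_coweight {x : V} (hx : x ∈ coweightLattice Φ) : -x ∈ coweightLattice Φ := fun a ha => by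
  obtain ⟨k, hk⟩ := hx a ha
  exact ⟨-k, by rw [inner_neg_left, hk]; push_cast; rfl⟩

lemma zero_coweight : (0 : V) ∈ coweightLattice Φ := fun a _ => ⟨0, by simp⟩

lemma zsmul_coweight {x : V} (hx : x ∈ coweightLattice Φ) (k : ℤ) :
    (k : ℝ) • x ∈ coweightLattice Φ := fun a ha => by
  obtain ⟨l, hl⟩ := hx a ha
  exact ⟨k * l, by rw [real_inner_smul_left, hl]; push_cast; rfl⟩

/-! ### Signs of roots -/

section base

variable {n : ℕ} {α : Fin n → V} {ϖ : Fin n → V}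

lemma inner_sum_base (hϖ : ∀ i j, ⟪ϖ i, α j⟫ = if i = j then 1 else 0) (c : Fin n → ℝ)
    (k : Fin n) : ⟪ϖ k, ∑ i, c i • α i⟫ = c k := by
  simp [inner_sum, real_inner_smul_right, hϖ]

lemma expand (hα : IsBase Φ α) (hϖ : ∀ i j, ⟪ϖ i, α j⟫ = if i = j then 1 else 0) (x : V) :
    x = ∑ i, ⟪ϖ i, x⟫ • α i := by
  have hx : x ∈ Submodule.span ℝ (Set.range α) := hα.spans ▸ Submodule.mem_top
  obtain ⟨c, rfl⟩ := (Submodule.mem_span_range_iff_exists_fun ℝ).1 hx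
  simp only [inner_sum_base hϖ]

lemma root_coord (hα : IsBase Φ α) (hϖ : ∀ i j, ⟪ϖ i, α j⟫ = if i = j then 1 else 0) {b : V}
    (hb : b ∈ Φ) : ∃ c : Fin n → ℤ, (∀ k, ⟪ϖ k, b⟫ = (c k : ℝ)) ∧ b = ∑ i, (c i : ℝ) • α i ∧
      ((∀ i, 0 ≤ c i) ∨ (∀ i, c i ≤ 0)) := by
  obtain ⟨c, hc, h⟩ := hα.int_comb b hb
  exact ⟨c, fun k => by rw [hc, inner_sum_base hϖ], hc, h⟩

lemma coweight_of_simple (hα : IsBase Φ α) {x : V} (hx : ∀ i, ∃ k : ℤ, ⟪x, α i⟫ = k) :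
    x ∈ coweightLattice Φ := fun a ha => by
  obtain ⟨c, hc, -⟩ := hα.int_comb a ha
  choose k hk using hx
  refine ⟨∑ i, c i * k i, ?_⟩
  rw [hc, inner_sum]
  simp [real_inner_smul_right, hk]

lemma fund_coweight (hα : IsBase Φ α) (hϖ : ∀ i j, ⟪ϖ i, α j⟫ = if i = j then 1 else 0)
    (j : Fin n) : ϖ j ∈ coweightLattice Φ :=
  coweight_of_simple hα fun i => ⟨if j = i then 1 else 0, by rw [hϖ]; push_cast; rfl⟩

/-- The sum `ρ` of the fundamental coweights; `⟪ρ, β⟫` is the height of `β`. -/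
noncomputable def rho (ϖ : Fin n → V) : V := ∑ i, ϖ i

lemma inner_rho (x : V) : ⟪rho ϖ, x⟫ = ∑ i, ⟪ϖ i, x⟫ := by
  rw [rho, sum_inner]

lemma rho_simple (hϖ : ∀ i j, ⟪ϖ i, α j⟫ = if i = j then 1 else 0) (j : Fin n) :
    ⟪rho ϖ, α j⟫ = 1 := by
  simp [inner_rho, hϖ]

lemma rho_coweight (hα : IsBase Φ α) (hϖ : ∀ i j, ⟪ϖ i, α j⟫ = if i = j then 1 else 0) :
    rho ϖ ∈ coweightLattice Φ :=
  coweight_of_simple hα fun i => ⟨1, by rw [rho_simple hϖ]; norm_num⟩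

lemma nonneg_of_coord (hα : IsBase Φ α) (hϖ : ∀ i j, ⟪ϖ i, α j⟫ = if i = j then 1 else 0)
    {b : V} (hb : b ∈ Φ) {k : Fin n} (hk : 0 < ⟪ϖ k, b⟫) (i : Fin n) : 0 ≤ ⟪ϖ i, b⟫ := by
  obtain ⟨c, hc, -, h | h⟩ := root_coord hα hϖ hb
  · rw [hc]; exact_mod_cast h i
  · rw [hc] at hk
    have := h k
    have : 0 < c k := by exact_mod_cast hk
    omega

lemma exists_coord_ne (hΦ : IsRootSystem Φ) (hα : IsBase Φ α)
    (hϖ : ∀ i j, ⟪ϖ i, α j⟫ = if i = j then 1 else 0)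
    {b : V} (hb : b ∈ Φ) : ∃ k, ⟪ϖ k, b⟫ ≠ 0 := by
  by_contra! h
  apply hΦ.not_zero
  rw [expand hα hϖ b] at hb
  simpa [h] using hb

/-- One positive coordinate makes a root positive, so the height of a root carries its sign. -/
lemma pos_of_coord (hα : IsBase Φ α) (hϖ : ∀ i j, ⟪ϖ i, α j⟫ = if i = j then 1 else 0)
    {b : V} (hb : b ∈ Φ) {k : Fin n} (hk : 0 < ⟪ϖ k, b⟫) : 0 < ⟪rho ϖ, b⟫ := by
  rw [inner_rho]
  exact Finset.sum_pos' (fun i _ => nonneg_of_coord hα hϖ hb hk i) ⟨k, Finset.mem_univ _, hk⟩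

lemma nonneg_of_rho (hΦ : IsRootSystem Φ) (hα : IsBase Φ α)
    (hϖ : ∀ i j, ⟪ϖ i, α j⟫ = if i = j then 1 else 0)
    {b : V} (hb : b ∈ Φ) (h : 0 < ⟪rho ϖ, b⟫) (i : Fin n) : 0 ≤ ⟪ϖ i, b⟫ := by
  obtain ⟨k, hk⟩ := exists_coord_ne hΦ hα hϖ hb
  rcases lt_or_gt_of_ne hk with hk | hk
  · have := pos_of_coord hα hϖ (neg_mem hΦ hb) (k := k) (by rw [inner_neg_right]; linarith)
    rw [inner_neg_right] at this
    linarith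
  · exact nonneg_of_coord hα hϖ hb hk i

lemma rho_ne_zero (hΦ : IsRootSystem Φ) (hα : IsBase Φ α)
    (hϖ : ∀ i j, ⟪ϖ i, α j⟫ = if i = j then 1 else 0)
    {b : V} (hb : b ∈ Φ) : ⟪rho ϖ, b⟫ ≠ 0 := by
  obtain ⟨k, hk⟩ := exists_coord_ne hΦ hα hϖ hb
  rcases lt_or_gt_of_ne hk with hk | hk
  · have := pos_of_coord hα hϖ (neg_mem hΦ hb) (k := k) (by rw [inner_neg_right]; linarith)
    rw [inner_neg_right] at this
    linarith
  · exact (pos_of_coord hα hϖ hb hk).ne'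

/-- A simple reflection makes no positive root negative except its own simple root: any other
positive root has another positive coordinate, which the reflection leaves alone. -/
lemma simple_refl_pos (hΦ : IsRootSystem Φ) (hα : IsBase Φ α)
    (hϖ : ∀ i j, ⟪ϖ i, α j⟫ = if i = j then 1 else 0)
    {b : V} (hb : b ∈ Φ) (h : 0 < ⟪rho ϖ, b⟫) {i : Fin n} (hbi : b ≠ α i) :
    0 < ⟪rho ϖ, refl (α i) b⟫ := by
  have hex : ∃ k, k ≠ i ∧ ⟪ϖ k, b⟫ ≠ 0 := by
    by_contra! hk
    have he := expand hα hϖ b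
    rw [Finset.sum_eq_single i (fun k _ hki => by rw [hk k hki, zero_smul]) (by simp)] at he
    rcases hΦ.reduced (α i) (hα.mem i) ⟪ϖ i, b⟫ (he ▸ hb) with h1 | h1
    · rw [h1, one_smul] at he
      exact hbi he
    · rw [h1] at he
      rw [he, real_inner_smul_right, rho_simple hϖ] at h
      linarith
  obtain ⟨k, hki, hk⟩ := hex
  have hk' : 0 < ⟪ϖ k, b⟫ := lt_of_le_of_ne (nonneg_of_rho hΦ hα hϖ hb h k) hk.symm
  refine pos_of_coord hα hϖ (k := k) (weyl_mem hΦ (refl_mem_weyl (hα.mem i)) hb) ?_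
  rw [refl_apply, reflMap, inner_sub_right, real_inner_smul_right, hϖ, if_neg hki]
  simpa using hk'

/-! ### Simple reflections generate, and the Weyl group acts freely on chambers -/

/-- The product of simple reflections spelled by a word in the indices. -/
noncomputable def word (α : Fin n → V) (l : List (Fin n)) : V ≃ₗᵢ[ℝ] V :=
  (l.map fun i => refl (α i)).prod

lemma word_cons (i : Fin n) (l : List (Fin n)) : word α (i :: l) = refl (α i) * word α l := by
  simp [word]

lemma word_append (l l' : List (Fin n)) : word α (l ++ l') = word α l * word α l' := by
  simp [word]

lemma word_singleton (i : Fin n) : word α [i] = refl (α i) := by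
  simp [word]

lemma word_mem (hα : IsBase Φ α) (l : List (Fin n)) : word α l ∈ WeylGroup Φ := by
  induction l with
  | nil => exact one_mem _
  | cons i t ih => rw [word_cons]; exact mul_mem (refl_mem_weyl (hα.mem i)) ih

lemma word_inv (l : List (Fin n)) : ∃ l', word α l' = (word α l)⁻¹ := by
  induction l with
  | nil => exact ⟨[], by simp [word]⟩
  | cons i t ih =>
    obtain ⟨l', h⟩ := ih
    refine ⟨l' ++ [i], ?_⟩
    rw [word_append, word_singleton, word_cons, mul_inv_rev, h,
      inv_eq_of_mul_eq_one_left (refl_mul_self (α i))]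

/-- Every reflection in a positive root is a product of simple reflections, by induction on the
height: a positive root `b` has `⟪α i, b⟫ > 0` for some `i`, and then the reflection in `α i`
either lowers its height or `b = α i`. -/
lemma refl_eq_word (hΦ : IsRootSystem Φ) (hα : IsBase Φ α)
    (hϖ : ∀ i j, ⟪ϖ i, α j⟫ = if i = j then 1 else 0) (N : ℕ) :
    ∀ b ∈ Φ, 0 < ⟪rho ϖ, b⟫ → ⟪rho ϖ, b⟫ < N → ∃ l, word α l = refl b := by
  induction N with
  | zero =>
    intro b _ h1 h2
    rw [Nat.cast_zero] at h2
    linarith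
  | succ N ih =>
    intro b hb h1 h2
    have hex : ∃ i, 0 < ⟪α i, b⟫ := by
      by_contra! h
      have hpos : 0 < ⟪b, b⟫ := real_inner_self_pos.2 fun h => hΦ.not_zero (h ▸ hb)
      have he : ⟪b, b⟫ = ∑ i, ⟪ϖ i, b⟫ * ⟪α i, b⟫ := by
        conv_lhs => rw [expand hα hϖ b]
        rw [sum_inner]
        simp only [real_inner_smul_left]
        rw [← expand hα hϖ b]
      have : ∑ i, ⟪ϖ i, b⟫ * ⟪α i, b⟫ ≤ 0 :=
        Finset.sum_nonpos fun i _ =>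
          mul_nonpos_of_nonneg_of_nonpos (nonneg_of_rho hΦ hα hϖ hb h1 i) (h i)
      linarith
    obtain ⟨i, hi⟩ := hex
    by_cases hbi : b = α i
    · exact ⟨[i], by rw [word_singleton, hbi]⟩
    have hb' := weyl_mem hΦ (refl_mem_weyl (hα.mem i)) hb
    have hlow : ⟪rho ϖ, refl (α i) b⟫ ≤ ⟪rho ϖ, b⟫ - 1 := by
      obtain ⟨k, hk⟩ := hΦ.crystallographic (α i) (hα.mem i) b hb
      have hα0 : 0 < ⟪α i, α i⟫ :=
        real_inner_self_pos.2 fun h => hΦ.not_zero (h ▸ hα.mem i)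
      have hk0 : 0 < (k : ℝ) := by rw [← hk]; positivity
      have hk1 : (1 : ℝ) ≤ k := by exact_mod_cast hk0
      rw [refl_apply, reflMap, inner_sub_right, real_inner_smul_right, rho_simple hϖ, hk]
      linarith
    obtain ⟨l, hl⟩ := ih _ hb' (simple_refl_pos hΦ hα hϖ hb h1 hbi) (by
      push_cast at h2; linarith)
    refine ⟨i :: (l ++ [i]), ?_⟩
    rw [word_cons, word_append, word_singleton, hl, refl_conj,
      inv_eq_of_mul_eq_one_left (refl_mul_self (α i))]
    simp only [mul_assoc, refl_mul_self, mul_one]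
    rw [← mul_assoc, refl_mul_self, one_mul]

lemma weyl_eq_word (hΦ : IsRootSystem Φ) (hα : IsBase Φ α)
    (hϖ : ∀ i j, ⟪ϖ i, α j⟫ = if i = j then 1 else 0) {w : V ≃ₗᵢ[ℝ] V} (hw : w ∈ WeylGroup Φ) :
    ∃ l, word α l = w := by
  induction hw using Subgroup.closure_induction with
  | mem x hx =>
    obtain ⟨a, ha, hx⟩ := hx
    have : x = refl a := by ext y; rw [hx, refl_apply]
    subst this
    rcases lt_or_gt_of_ne (rho_ne_zero hΦ hα hϖ ha) with h | h
    · obtain ⟨N, hN⟩ := exists_nat_gt ⟪rho ϖ, -a⟫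
      rw [← refl_neg]
      exact refl_eq_word hΦ hα hϖ N _ (neg_mem hΦ ha) (by rw [inner_neg_right]; linarith) hN
    · obtain ⟨N, hN⟩ := exists_nat_gt ⟪rho ϖ, a⟫
      exact refl_eq_word hΦ hα hϖ N _ ha h hN
  | one => exact ⟨[], by simp [word]⟩
  | mul x y _ _ h1 h2 =>
    obtain ⟨l, rfl⟩ := h1
    obtain ⟨l', rfl⟩ := h2
    exact ⟨l ++ l', word_append l l'⟩
  | inv x _ h =>
    obtain ⟨l, rfl⟩ := h
    exact word_inv l

/-- The exchange property: if a word sends `α k` to a negative root, multiplying by the reflection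
in `α k` on the right amounts to deleting a letter. -/
lemma exchange (hΦ : IsRootSystem Φ) (hα : IsBase Φ α)
    (hϖ : ∀ i j, ⟪ϖ i, α j⟫ = if i = j then 1 else 0) (k : Fin n) (l : List (Fin n))
    (h : ⟪rho ϖ, word α l (α k)⟫ < 0) :
    ∃ l', l'.length + 1 = l.length ∧ word α l' = word α l * refl (α k) := by
  induction l with
  | nil =>
    have : word α [] (α k) = α k := by simp [word]
    rw [this, rho_simple hϖ] at h
    linarith
  | cons i t ih =>
    have hmem := weyl_mem hΦ (word_mem hα t) (hα.mem k)
    rcases lt_or_gt_of_ne (rho_ne_zero hΦ hα hϖ hmem) with h1 | h1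
    · obtain ⟨t', h2, h3⟩ := ih h1
      exact ⟨i :: t', by simp [h2], by rw [word_cons, word_cons, h3, mul_assoc]⟩
    · have hb : word α t (α k) = α i := by
        by_contra hne
        have := simple_refl_pos hΦ hα hϖ hmem h1 hne
        rw [word_cons] at h
        exact absurd h (not_lt.2 this.le)
      refine ⟨t, rfl, ?_⟩
      have hc := refl_conj (word α t) (α k)
      rw [hb] at hc
      rw [word_cons, hc]
      simp [mul_assoc, refl_mul_self]

lemma word_eq_one (hΦ : IsRootSystem Φ) (hα : IsBase Φ α)
    (hϖ : ∀ i j, ⟪ϖ i, α j⟫ = if i = j then 1 else 0) (N : ℕ) :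
    ∀ l : List (Fin n), l.length ≤ N → (∀ i, 0 < ⟪rho ϖ, word α l (α i)⟫) → word α l = 1 := by
  induction N with
  | zero =>
    intro l hl _
    rw [List.length_eq_zero_iff.1 (Nat.le_zero.1 hl)]
    simp [word]
  | succ N ih =>
    intro l hl h
    rcases List.eq_nil_or_concat l with rfl | ⟨t, k, rfl⟩
    · simp [word]
    rw [List.concat_eq_append] at hl h ⊢
    have hk := h k
    have hk0 : α k ≠ 0 := fun h => hΦ.not_zero (h ▸ hα.mem k)
    rw [word_append, word_singleton, LinearIsometryEquiv.coe_mul, Function.comp_apply, refl_apply,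
      reflMap_self hk0, map_neg, inner_neg_right] at hk
    obtain ⟨t', h1, h2⟩ := exchange hΦ hα hϖ k t (by linarith)
    have he : word α (t ++ [k]) = word α t' := by rw [h2, word_append, word_singleton]
    rw [he] at h ⊢
    rw [List.length_append] at hl
    exact ih t' (by simp at hl; omega) h

/-- The Weyl group acts freely on chambers. -/
lemma weyl_free (hΦ : IsRootSystem Φ) (hα : IsBase Φ α)
    (hϖ : ∀ i j, ⟪ϖ i, α j⟫ = if i = j then 1 else 0) {w : V ≃ₗᵢ[ℝ] V} (hw : w ∈ WeylGroup Φ)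
    (h : ∀ i, 0 < ⟪rho ϖ, w (α i)⟫) : w = 1 := by
  obtain ⟨l, rfl⟩ := weyl_eq_word hΦ hα hϖ hw
  exact word_eq_one hΦ hα hϖ _ l le_rfl h

/-! ### The Weyl group acts transitively on chambers -/

lemma weyl_finite (hΦ : IsRootSystem Φ) (hα : IsBase Φ α) :
    (WeylGroup Φ : Set (V ≃ₗᵢ[ℝ] V)).Finite := by
  have hfin : (Set.univ.pi fun _ : Fin n => Φ).Finite := Set.Finite.pi fun _ => hΦ.finite
  refine Set.Finite.of_finite_image (f := fun w => fun i => w (α i))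
    (hfin.subset ?_) ?_
  · rintro _ ⟨w, hw, rfl⟩ i _
    exact weyl_mem hΦ hw (hα.mem i)
  · intro w _ w' _ h
    have : w.toLinearEquiv.toLinearMap = w'.toLinearEquiv.toLinearMap :=
      LinearMap.ext_on_range (v := α) hα.spans fun i => congrFun h i
    ext x
    exact LinearMap.congr_fun this x

/-- Every regular vector is moved into the open dominant chamber: take `w` maximizing the height
`⟪ρ, w y⟫`. -/
lemma weyl_trans (hΦ : IsRootSystem Φ) (hα : IsBase Φ α)
    (hϖ : ∀ i j, ⟪ϖ i, α j⟫ = if i = j then 1 else 0) {y : V} (hy : ∀ b ∈ Φ, ⟪y, b⟫ ≠ 0) :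
    ∃ w ∈ WeylGroup Φ, ∀ i, 0 < ⟪α i, w y⟫ := by
  obtain ⟨w, hw, hmax⟩ := Set.exists_max_image _ (fun w : V ≃ₗᵢ[ℝ] V => ⟪rho ϖ, w y⟫)
    (weyl_finite hΦ hα) ⟨1, one_mem _⟩
  refine ⟨w, hw, fun i => ?_⟩
  have h1 := hmax (refl (α i) * w) (mul_mem (refl_mem_weyl (hα.mem i)) hw)
  have hα0 : 0 < ⟪α i, α i⟫ := real_inner_self_pos.2 fun h => hΦ.not_zero (h ▸ hα.mem i)
  simp only [LinearIsometryEquiv.coe_mul, Function.comp_apply, refl_apply, reflMap,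
    inner_sub_right, real_inner_smul_right, rho_simple hϖ, mul_one] at h1
  have h2 : 0 ≤ 2 * ⟪α i, w y⟫ / ⟪α i, α i⟫ := by linarith
  have h3 : 0 ≤ ⟪α i, w y⟫ := by
    by_contra! h
    exact absurd h2 (not_le.2 (div_neg_of_neg_of_pos (by linarith) hα0))
  refine lt_of_le_of_ne h3 fun h => ?_
  apply hy _ (weyl_mem hΦ (inv_mem hw) (hα.mem i))
  rw [real_inner_comm, inner_inv_left, ← h]

/-- If `z` is at least `1` on the simple roots, any family of `n` distinct roots on which
`z` takes the value `1` enumerates the simple roots. -/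
lemma range_eq_of_height (hα : IsBase Φ α) {β : Fin n → V} (hβ : ∀ k, β k ∈ Φ)
    (hinj : Function.Injective β) {z : V} (hz : ∀ k, ⟪z, β k⟫ = 1) (hz' : ∀ i, 1 ≤ ⟪z, α i⟫) :
    Set.range β = Set.range α := by
  have key : ∀ k, ∃ i, β k = α i := by
    intro k
    obtain ⟨c, hc, hs⟩ := hα.int_comb (β k) (hβ k)
    have h1 : ∑ i, (c i : ℝ) * ⟪z, α i⟫ = 1 := by
      rw [← hz k, hc, inner_sum]
      simp [real_inner_smul_right]
    have hnn : ∀ i, 0 ≤ c i := by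
      rcases hs with hs | hs
      · exact hs
      · exfalso
        have : ∑ i, (c i : ℝ) * ⟪z, α i⟫ ≤ 0 := Finset.sum_nonpos fun i _ =>
          mul_nonpos_of_nonpos_of_nonneg (by exact_mod_cast hs i) (by linarith [hz' i])
        linarith
    have h2 : ∑ i, c i ≤ 1 := by
      have : ∑ i, (c i : ℝ) ≤ ∑ i, (c i : ℝ) * ⟪z, α i⟫ := Finset.sum_le_sum fun i _ =>
        le_mul_of_one_le_right (by exact_mod_cast hnn i) (hz' i)
      rw [h1] at this
      exact_mod_cast this
    obtain ⟨i, hi⟩ : ∃ i, c i ≠ 0 := by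
      by_contra! h
      simp [h] at h1
    have hi1 : 1 ≤ c i := by have := hnn i; omega
    have h3 := Finset.add_sum_erase Finset.univ c (Finset.mem_univ i)
    have h4 : 0 ≤ ∑ j ∈ Finset.univ.erase i, c j := Finset.sum_nonneg fun j _ => hnn j
    have h5 : ∑ j ∈ Finset.univ.erase i, c j = 0 := by omega
    have hci : c i = 1 := by omega
    refine ⟨i, ?_⟩
    rw [hc, Finset.sum_eq_single i]
    · rw [hci]; simp
    · intro j _ hj
      have := (Finset.sum_eq_zero_iff_of_nonneg fun j _ => hnn j).1 h5 j
        (Finset.mem_erase.2 ⟨hj, Finset.mem_univ _⟩)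
      rw [this]; simp
    · simp
  choose σ hσ using key
  have hσi : Function.Injective σ := fun a b h => hinj (by rw [hσ a, hσ b, h])
  have hσs : Function.Surjective σ := Finite.surjective_of_injective hσi
  ext x
  constructor
  · rintro ⟨k, rfl⟩
    exact ⟨σ k, (hσ k).symm⟩
  · rintro ⟨i, rfl⟩
    obtain ⟨k, rfl⟩ := hσs i
    exact ⟨k, hσ k⟩

/-! ### The alcove and its stabilizer -/

variable {m : Fin n → ℕ} {α₀ : V}

lemma inner_highest (h₀ : IsHighestRoot Φ α m α₀)
    (hϖ : ∀ i j, ⟪ϖ i, α j⟫ = if i = j then 1 else 0) (k : Fin n) : ⟪ϖ k, α₀⟫ = m k := by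
  rw [h₀.eq, inner_sum_base hϖ]

lemma coord_le (hα : IsBase Φ α) (h₀ : IsHighestRoot Φ α m α₀)
    (hϖ : ∀ i j, ⟪ϖ i, α j⟫ = if i = j then 1 else 0) {b : V} (hb : b ∈ Φ) (k : Fin n) :
    ⟪ϖ k, b⟫ ≤ m k := by
  obtain ⟨c, h1, h2, -⟩ := root_coord hα hϖ hb
  rw [h1]
  exact_mod_cast h₀.highest b hb c h2 k

lemma rho_highest (h₀ : IsHighestRoot Φ α m α₀)
    (hϖ : ∀ i j, ⟪ϖ i, α j⟫ = if i = j then 1 else 0) : ⟪rho ϖ, α₀⟫ = ∑ k, (m k : ℝ) := by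
  simp only [inner_rho, inner_highest h₀ hϖ]

/-- The highest root is the only root of its height. -/
lemma eq_highest (hα : IsBase Φ α) (h₀ : IsHighestRoot Φ α m α₀)
    (hϖ : ∀ i j, ⟪ϖ i, α j⟫ = if i = j then 1 else 0) {b : V} (hb : b ∈ Φ)
    (h : ⟪rho ϖ, b⟫ = ∑ k, (m k : ℝ)) : b = α₀ := by
  rw [inner_rho] at h
  have := (Finset.sum_eq_sum_iff_of_le fun k _ => coord_le hα h₀ hϖ hb k).1 h
  rw [expand hα hϖ b, h₀.eq]
  exact Finset.sum_congr rfl fun k hk => by rw [this k hk]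

lemma alcove_inter (hα : IsBase Φ α) (h₀ : IsHighestRoot Φ α m α₀)
    (hϖ : ∀ i j, ⟪ϖ i, α j⟫ = if i = j then 1 else 0) :
    alcove α α₀ ∩ coweightLattice Φ = insert (0 : V) {x | ∃ j, m j = 1 ∧ x = ϖ j} := by
  have hext : ∀ x y : V, (∀ i, ⟪α i, x⟫ = ⟪α i, y⟫) → x = y := by
    intro x y h
    rw [← sub_eq_zero, ← inner_self_eq_zero (𝕜 := ℝ), expand hα hϖ (x - y), sum_inner]
    refine Finset.sum_eq_zero fun i _ => ?_
    rw [← expand hα hϖ (x - y), real_inner_smul_left, inner_sub_right (α i), h i,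
      sub_self, mul_zero]
  ext x
  constructor
  · rintro ⟨⟨h1, h2⟩, h3⟩
    choose k hk using fun i => h3 (α i) (hα.mem i)
    have hk' : ∀ i, ⟪α i, x⟫ = k i := fun i => by rw [real_inner_comm, hk]
    have hk0 : ∀ i, 0 ≤ k i := fun i => by have := h1 i; rw [hk'] at this; exact_mod_cast this
    have hs : ∑ i, (m i : ℤ) * k i ≤ 1 := by
      rw [h₀.eq, sum_inner] at h2
      simp only [real_inner_smul_left, hk'] at h2
      exact_mod_cast h2
    by_cases hz : ∀ i, k i = 0
    · left
      exact hext _ _ fun i => by simp [hk', hz i]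
    · right
      push Not at hz
      obtain ⟨j, hj⟩ := hz
      have hj1 : 1 ≤ k j := by have := hk0 j; omega
      have hm : ∀ i, (1 : ℤ) ≤ m i := fun i => by exact_mod_cast h₀.pos i
      have hnn : ∀ i, 0 ≤ (m i : ℤ) * k i := fun i => mul_nonneg (by positivity) (hk0 i)
      have e1 := Finset.add_sum_erase Finset.univ (fun i => (m i : ℤ) * k i) (Finset.mem_univ j)
      have e2 : 0 ≤ ∑ i ∈ Finset.univ.erase j, (m i : ℤ) * k i :=
        Finset.sum_nonneg fun i _ => hnn i
      have e3 : (1 : ℤ) ≤ m j * k j := by nlinarith [hm j]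
      have e4 : ∑ i ∈ Finset.univ.erase j, (m i : ℤ) * k i = 0 := by omega
      have e5 : (m j : ℤ) * k j = 1 := by omega
      have e6 : (m j : ℤ) = 1 := by nlinarith [hm j]
      have e7 : k j = 1 := by rw [e6] at e5; omega
      refine ⟨j, by exact_mod_cast e6, hext _ _ fun i => ?_⟩
      rw [hk', real_inner_comm, hϖ]
      by_cases hij : j = i
      · subst hij; simp [e7]
      · have := (Finset.sum_eq_zero_iff_of_nonneg fun i _ => hnn i).1 e4 i
          (Finset.mem_erase.2 ⟨fun h => hij h.symm, Finset.mem_univ _⟩)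
        have hki : k i = 0 := by
          rcases mul_eq_zero.1 this with h | h
          · have := hm i; omega
          · exact h
        simp [hij, hki]
  · rintro (rfl | ⟨j, hj, rfl⟩)
    · exact ⟨⟨by simp, by simp⟩, zero_coweight⟩
    · refine ⟨⟨fun i => ?_, ?_⟩, fund_coweight hα hϖ j⟩
      · rw [real_inner_comm, hϖ]; split_ifs <;> norm_num
      · rw [real_inner_comm, inner_highest h₀ hϖ, hj]; norm_num

/-- An element of the Weyl group preserving the alcove is trivial: the interior point
`h⁻¹ρ` of the alcove, `h = 1 + ⟪ρ, α₀⟫`, goes to the alcove under `w⁻¹`. -/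
lemma weyl_alcove (hΦ : IsRootSystem Φ) (hα : IsBase Φ α) (h₀ : IsHighestRoot Φ α m α₀)
    (hϖ : ∀ i j, ⟪ϖ i, α j⟫ = if i = j then 1 else 0) {w : V ≃ₗᵢ[ℝ] V} (hw : w ∈ WeylGroup Φ)
    (h : ∀ x, w x ∈ alcove α α₀ → x ∈ alcove α α₀) : w = 1 := by
  refine weyl_free hΦ hα hϖ hw fun i => ?_
  set t : ℝ := 1 + ⟪rho ϖ, α₀⟫ with ht
  have hr : 0 ≤ ⟪rho ϖ, α₀⟫ := by rw [rho_highest h₀ hϖ]; positivity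
  have ht0 : 0 < t := by linarith
  have hmem : w (w⁻¹ (t⁻¹ • rho ϖ)) ∈ alcove α α₀ := by
    have : w (w⁻¹ (t⁻¹ • rho ϖ)) = t⁻¹ • rho ϖ := w.apply_symm_apply _
    rw [this]
    refine ⟨fun i => ?_, ?_⟩
    · rw [real_inner_smul_right, real_inner_comm, rho_simple hϖ]; positivity
    · rw [real_inner_smul_right, real_inner_comm, inv_mul_le_one₀ ht0]; linarith
  have h1 := (h _ hmem).1 i
  rw [real_inner_comm, inner_inv_left, real_inner_smul_left] at h1
  have h2 : 0 ≤ ⟪rho ϖ, w (α i)⟫ := by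
    by_contra! hn
    exact absurd h1 (not_le.2 (mul_neg_of_pos_of_neg (inv_pos.2 ht0) hn))
  exact lt_of_le_of_ne h2 (rho_ne_zero hΦ hα hϖ (weyl_mem hΦ hw (hα.mem i))).symm

/-- For a minuscule `α j` the vector `ρ - h ϖ_j`, `h = 1 + ⟪ρ, α₀⟫`, is regular and takes the
value `1` on `{-α₀} ∪ (Π ∖ {α j})`; a Weyl group element moving it into the dominant chamber
therefore carries this set to `Π`. -/
lemma exists_v (hΦ : IsRootSystem Φ) (hα : IsBase Φ α) (h₀ : IsHighestRoot Φ α m α₀)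
    (hϖ : ∀ i j, ⟪ϖ i, α j⟫ = if i = j then 1 else 0) {j : Fin n} (hj : m j = 1) :
    ∃ v ∈ WeylGroup Φ, ⇑v '' Set.range α = Set.range (Function.update α j (-α₀)) := by
  set t : ℝ := 1 + ⟪rho ϖ, α₀⟫ with ht
  set y : V := rho ϖ - t • ϖ j with hy
  set β : Fin n → V := Function.update α j (-α₀) with hβ
  have hyβ : ∀ k, ⟪y, β k⟫ = 1 := by
    intro k
    by_cases hk : k = j
    · subst hk
      rw [hβ, Function.update_self, hy, inner_sub_left, real_inner_smul_left, inner_neg_right,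
        inner_neg_right, inner_highest h₀ hϖ, hj, ht]
      push_cast
      ring
    · rw [hβ, Function.update_of_ne hk, hy, inner_sub_left, real_inner_smul_left, rho_simple hϖ,
        hϖ, if_neg (Ne.symm hk)]
      ring
  have hβΦ : ∀ k, β k ∈ Φ := by
    intro k
    by_cases hk : k = j
    · subst hk; rw [hβ, Function.update_self]; exact neg_mem hΦ h₀.mem
    · rw [hβ, Function.update_of_ne hk]; exact hα.mem k
  have hβinj : Function.Injective β := by
    have hne : ∀ k, α k ≠ -α₀ := by
      intro k h
      have h1 := rho_simple hϖ k
      rw [h, inner_neg_right, rho_highest h₀ hϖ] at h1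
      have : (0 : ℝ) ≤ ∑ k, (m k : ℝ) := by positivity
      linarith
    intro a b hab
    by_cases ha : a = j <;> by_cases hb : b = j
    · rw [ha, hb]
    · rw [hβ, ha, Function.update_self, Function.update_of_ne hb] at hab
      exact absurd hab.symm (hne b)
    · rw [hβ, hb, Function.update_self, Function.update_of_ne ha] at hab
      exact absurd hab (hne a)
    · rw [hβ, Function.update_of_ne hb, Function.update_of_ne ha] at hab
      exact hα.indep.injective hab
  have hneg : ∀ b ∈ Φ, 0 < ⟪ϖ j, b⟫ → ⟪y, b⟫ < 0 := by
    intro b hb hpos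
    have h1 : (1 : ℝ) ≤ ⟪ϖ j, b⟫ := by
      obtain ⟨c, hc, -⟩ := root_coord hα hϖ hb
      rw [hc] at hpos ⊢
      exact_mod_cast hpos
    have h2 : ⟪rho ϖ, b⟫ ≤ ⟪rho ϖ, α₀⟫ := by
      rw [rho_highest h₀ hϖ, inner_rho]
      exact Finset.sum_le_sum fun k _ => coord_le hα h₀ hϖ hb k
    have h3 : 0 ≤ ⟪rho ϖ, α₀⟫ := by rw [rho_highest h₀ hϖ]; positivity
    rw [hy, inner_sub_left, real_inner_smul_left]
    nlinarith
  have hreg : ∀ b ∈ Φ, ⟪y, b⟫ ≠ 0 := by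
    intro b hb
    rcases lt_trichotomy ⟪ϖ j, b⟫ 0 with h | h | h
    · have := hneg (-b) (neg_mem hΦ hb) (by rw [inner_neg_right]; linarith)
      rw [inner_neg_right] at this
      linarith
    · rw [hy, inner_sub_left, real_inner_smul_left, h, mul_zero, sub_zero]
      exact rho_ne_zero hΦ hα hϖ hb
    · exact (hneg b hb h).ne
  have hyP : y ∈ coweightLattice Φ := by
    rw [hy, sub_eq_add_neg]
    have : t = ((1 + ∑ k, (m k : ℤ) : ℤ) : ℝ) := by
      rw [ht, rho_highest h₀ hϖ]; push_cast; rfl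
    rw [this]
    exact add_coweight (rho_coweight hα hϖ) (neg_coweight (zsmul_coweight (fund_coweight hα hϖ j) _))
  obtain ⟨w, hw, hpos⟩ := weyl_trans hΦ hα hϖ hreg
  have hrange : Set.range (w ∘ β) = Set.range α := by
    refine range_eq_of_height hα (fun k => weyl_mem hΦ hw (hβΦ k)) (w.injective.comp hβinj)
      (z := w y) (fun k => ?_) fun i => ?_
    · rw [Function.comp_apply, w.inner_map_map, hyβ]
    · obtain ⟨c, hc⟩ := weyl_coweight hΦ hw hyP (α i) (hα.mem i)
      have := hpos i
      rw [real_inner_comm, hc] at this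
      rw [hc]
      exact_mod_cast this
  refine ⟨w⁻¹, inv_mem hw, ?_⟩
  rw [← hrange, Set.range_comp, ← Set.image_comp]
  have : (⇑w⁻¹ ∘ ⇑w) = id := funext fun x => w.symm_apply_apply x
  rw [this, Set.image_id]

/-- If `v Π = {-α₀} ∪ (Π ∖ {α j})` with `α j` minuscule, then `v α₀ = -α j`, so `x ↦ v x + ϖ_j`
permutes the inequalities defining the alcove. -/
lemma omega_alcove (hΦ : IsRootSystem Φ) (hα : IsBase Φ α) (h₀ : IsHighestRoot Φ α m α₀)
    (hϖ : ∀ i j, ⟪ϖ i, α j⟫ = if i = j then 1 else 0) {j : Fin n} (hj : m j = 1)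
    {v : V ≃ₗᵢ[ℝ] V} (hv : v ∈ WeylGroup Φ)
    (hvr : ⇑v '' Set.range α = Set.range (Function.update α j (-α₀))) (x : V) :
    v x + ϖ j ∈ alcove α α₀ ↔ x ∈ alcove α α₀ := by
  set β : Fin n → V := Function.update α j (-α₀) with hβ
  have hinv : ∀ z, v⁻¹ (v z) = z := fun z => v.symm_apply_apply z
  have hβα : ∀ k, ∃ i, v⁻¹ (β k) = α i := by
    intro k
    have : β k ∈ ⇑v '' Set.range α := hvr ▸ Set.mem_range_self k
    obtain ⟨_, ⟨i, rfl⟩, h⟩ := this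
    exact ⟨i, by rw [← h, hinv]⟩
  have hαβ : ∀ i, ∃ k, v⁻¹ (β k) = α i := by
    intro i
    have : v (α i) ∈ Set.range β := hvr ▸ Set.mem_image_of_mem _ (Set.mem_range_self i)
    obtain ⟨k, hk⟩ := this
    exact ⟨k, by rw [hk, hinv]⟩
  have hβj : β j = -α₀ := by rw [hβ, Function.update_self]
  have hβk : ∀ k, k ≠ j → β k = α k := fun k hk => by rw [hβ, Function.update_of_ne hk]
  have hsum : -α j = ∑ k, (m k : ℝ) • β k := by
    have h1 := h₀.eq
    rw [← Finset.add_sum_erase _ _ (Finset.mem_univ j), hj] at h1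
    rw [← Finset.add_sum_erase _ _ (Finset.mem_univ j), hβj, hj,
      Finset.sum_congr rfl (fun k hk => by rw [hβk k (Finset.ne_of_mem_erase hk)])]
    nth_rewrite 1 [h1]
    module
  have hhigh : v⁻¹ (-α j) = α₀ := by
    refine eq_highest hα h₀ hϖ (weyl_mem hΦ (inv_mem hv) (neg_mem hΦ (hα.mem j))) ?_
    rw [hsum, map_sum, inner_sum]
    refine Finset.sum_congr rfl fun k _ => ?_
    obtain ⟨i, hi⟩ := hβα k
    rw [map_smul, real_inner_smul_right, hi, rho_simple hϖ, mul_one]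
  have hmv : ∀ a, ⟪a, v x⟫ = ⟪v⁻¹ a, x⟫ := fun a => (inner_inv_left v a x).symm
  have hα₀ : ⟪α₀, v x + ϖ j⟫ = 1 - ⟪v⁻¹ (β j), x⟫ := by
    rw [inner_add_right, hmv, hβj, map_neg, inner_neg_left, real_inner_comm (ϖ j),
      inner_highest h₀ hϖ, hj]
    push_cast
    ring
  have hαj : ⟪α j, v x + ϖ j⟫ = 1 - ⟪α₀, x⟫ := by
    rw [inner_add_right, hmv, ← hhigh, map_neg, inner_neg_left, real_inner_comm (ϖ j), hϖ]
    simp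
    ring
  have hαk : ∀ k, k ≠ j → ⟪α k, v x + ϖ j⟫ = ⟪v⁻¹ (β k), x⟫ := by
    intro k hk
    rw [inner_add_right, hmv, hβk k hk, real_inner_comm (ϖ j), hϖ, if_neg hk.symm, add_zero]
  constructor
  · rintro ⟨h1, h2⟩
    refine ⟨fun i => ?_, ?_⟩
    · obtain ⟨k, hk⟩ := hαβ i
      rw [← hk]
      by_cases hkj : k = j
      · subst hkj; linarith
      · rw [← hαk k hkj]; exact h1 k
    · have := h1 j
      linarith
  · rintro ⟨h1, h2⟩
    refine ⟨fun k => ?_, ?_⟩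
    · by_cases hkj : k = j
      · subst hkj; linarith
      · obtain ⟨i, hi⟩ := hβα k
        rw [hαk k hkj, hi]; exact h1 i
    · obtain ⟨i, hi⟩ := hβα j
      have := h1 i
      rw [hα₀, hi]; linarith

/-! ### The group `Ω` -/

lemma mem_alcove_iff {ζ : V ≃ᵃⁱ[ℝ] V} (h : ζ '' alcove α α₀ = alcove α α₀) (x : V) :
    ζ x ∈ alcove α α₀ ↔ x ∈ alcove α α₀ := by
  conv_lhs => rw [← h]
  exact ζ.injective.mem_set_image

lemma image_alcove {ζ : V ≃ᵃⁱ[ℝ] V} (h : ∀ x, ζ x ∈ alcove α α₀ ↔ x ∈ alcove α α₀) :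
    ζ '' alcove α α₀ = alcove α α₀ := by
  ext y
  obtain ⟨x, rfl⟩ := ζ.surjective y
  rw [ζ.injective.mem_set_image, h]

lemma fund_mul (hΦ : IsRootSystem Φ) {ζ η : V ≃ᵃⁱ[ℝ] V} (hζ : ζ ∈ fundGroup Φ α α₀)
    (hη : η ∈ fundGroup Φ α α₀) : ζ * η ∈ fundGroup Φ α α₀ := by
  obtain ⟨⟨γ, hγ, w, hw, h1⟩, h2⟩ := hζ
  obtain ⟨⟨δ, hδ, u, hu, h3⟩, h4⟩ := hη
  refine ⟨⟨w δ + γ, add_coweight (weyl_coweight hΦ hw hδ) hγ, w * u, mul_mem hw hu, fun x => ?_⟩,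
    ?_⟩
  · simp [h1, h3, add_assoc]
  · rw [AffineIsometryEquiv.coe_mul, Set.image_comp, h4, h2]

lemma fund_inv (hΦ : IsRootSystem Φ) {ζ : V ≃ᵃⁱ[ℝ] V} (hζ : ζ ∈ fundGroup Φ α α₀) :
    ζ⁻¹ ∈ fundGroup Φ α α₀ := by
  obtain ⟨⟨γ, hγ, w, hw, h1⟩, h2⟩ := hζ
  have hζi : ∀ x, ζ (ζ⁻¹ x) = x := fun x => ζ.apply_symm_apply x
  refine ⟨⟨w⁻¹ (-γ), weyl_coweight hΦ (inv_mem hw) (neg_coweight hγ), w⁻¹, inv_mem hw,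
    fun x => ?_⟩, image_alcove fun x => ?_⟩
  · apply ζ.injective
    have hwi : ∀ x, w (w⁻¹ x) = x := fun x => w.apply_symm_apply x
    rw [hζi, h1, map_add, hwi, hwi]
    abel
  · rw [← mem_alcove_iff h2, hζi]

lemma zero_mem_alcove : (0 : V) ∈ alcove α α₀ := ⟨by simp, by simp⟩

/-- The stabilizer of `0` in `Ω` is trivial. -/
lemma fund_zero (hΦ : IsRootSystem Φ) (hα : IsBase Φ α) (h₀ : IsHighestRoot Φ α m α₀)
    (hϖ : ∀ i j, ⟪ϖ i, α j⟫ = if i = j then 1 else 0) {ζ : V ≃ᵃⁱ[ℝ] V}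
    (hζ : ζ ∈ fundGroup Φ α α₀) (h : ζ 0 = 0) : ζ = 1 := by
  obtain ⟨⟨γ, hγ, w, hw, h1⟩, h2⟩ := hζ
  have hγ0 : γ = 0 := by simpa [h1] using h
  have hw1 : w = 1 := weyl_alcove hΦ hα h₀ hϖ hw fun x hx => by
    rw [← mem_alcove_iff h2, h1, hγ0, add_zero]
    exact hx
  ext x
  simp [h1, hγ0, hw1]

/-- The affine isometry `t_p ∘ v`. -/
noncomputable def omega (v : V ≃ₗᵢ[ℝ] V) (p : V) : V ≃ᵃⁱ[ℝ] V :=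
  v.toAffineIsometryEquiv.trans (AffineIsometryEquiv.constVAdd ℝ V p)

lemma omega_apply (v : V ≃ₗᵢ[ℝ] V) (p x : V) : omega v p x = v x + p := by
  simp [omega, add_comm]

lemma fund_of_v (hΦ : IsRootSystem Φ) (hα : IsBase Φ α) (h₀ : IsHighestRoot Φ α m α₀)
    (hϖ : ∀ i j, ⟪ϖ i, α j⟫ = if i = j then 1 else 0) {j : Fin n} (hj : m j = 1)
    {v : V ≃ₗᵢ[ℝ] V} (hv : v ∈ WeylGroup Φ)
    (hvr : ⇑v '' Set.range α = Set.range (Function.update α j (-α₀))) {ζ : V ≃ᵃⁱ[ℝ] V}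
    (hζ : ∀ x, ζ x = v x + ϖ j) : ζ ∈ fundGroup Φ α α₀ :=
  ⟨⟨ϖ j, fund_coweight hα hϖ j, v, hv, hζ⟩, image_alcove fun x => by
    rw [hζ]; exact omega_alcove hΦ hα h₀ hϖ hj hv hvr x⟩

lemma one_mem_fund : (1 : V ≃ᵃⁱ[ℝ] V) ∈ fundGroup Φ α α₀ :=
  ⟨⟨0, zero_coweight, 1, one_mem _, by simp⟩, by simp⟩

lemma fund_image_zero {ζ : V ≃ᵃⁱ[ℝ] V} (hζ : ζ ∈ fundGroup Φ α α₀) :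
    ζ 0 ∈ alcove α α₀ ∩ coweightLattice Φ := by
  refine ⟨(mem_alcove_iff hζ.2 0).2 zero_mem_alcove, ?_⟩
  obtain ⟨⟨γ, hγ, w, hw, h1⟩, -⟩ := hζ
  rw [h1, map_zero, zero_add]
  exact hγ

lemma exists_fund (hΦ : IsRootSystem Φ) (hα : IsBase Φ α) (h₀ : IsHighestRoot Φ α m α₀)
    (hϖ : ∀ i j, ⟪ϖ i, α j⟫ = if i = j then 1 else 0) {p : V}
    (hp : p ∈ alcove α α₀ ∩ coweightLattice Φ) : ∃ ζ ∈ fundGroup Φ α α₀, ζ 0 = p := by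
  rw [alcove_inter hα h₀ hϖ] at hp
  rcases hp with rfl | ⟨j, hj, rfl⟩
  · exact ⟨1, one_mem_fund, rfl⟩
  · obtain ⟨v, hv, hvr⟩ := exists_v hΦ hα h₀ hϖ hj
    exact ⟨omega v (ϖ j), fund_of_v hΦ hα h₀ hϖ hj hv hvr (omega_apply v _), by
      simp [omega_apply]⟩

/-- Since the stabilizer of `0` is trivial, an element of `Ω` is determined by the image of `0`. -/
lemma fund_ext_zero (hΦ : IsRootSystem Φ) (hα : IsBase Φ α) (h₀ : IsHighestRoot Φ α m α₀)
    (hϖ : ∀ i j, ⟪ϖ i, α j⟫ = if i = j then 1 else 0) {ζ η : V ≃ᵃⁱ[ℝ] V}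
    (hζ : ζ ∈ fundGroup Φ α α₀) (hη : η ∈ fundGroup Φ α α₀) (h : ζ 0 = η 0) : ζ = η := by
  have h1 : η⁻¹ * ζ = 1 := by
    refine fund_zero hΦ hα h₀ hϖ (fund_mul hΦ (fund_inv hΦ hη) hζ) ?_
    rw [AffineIsometryEquiv.coe_mul, Function.comp_apply, h]
    exact η.symm_apply_apply 0
  exact (inv_mul_eq_one.1 h1).symm

end base

end AlcoveStab

theorem statement_9
    {V : Type*} [NormedAddCommGroup V] [InnerProductSpace ℝ V] [FiniteDimensional ℝ V]
    (Φ : Set V) (hΦ : IsRootSystem Φ)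
    {n : ℕ} (α : Fin n → V) (hα : IsBase Φ α)
    (m : Fin n → ℕ) (α₀ : V) (h₀ : IsHighestRoot Φ α m α₀)
    (ϖ : Fin n → V) (hϖ : ∀ i j, ⟪ϖ i, α j⟫ = if i = j then 1 else 0) :
    -- `Ω = {id} ∪ {ω_j = t_{ϖ_j} ∘ v_j : α_j minuscule}`
    (∀ ζ : V ≃ᵃⁱ[ℝ] V, ζ ∈ fundGroup Φ α α₀ ↔
      ((∀ x, ζ x = x) ∨ ∃ j, m j = 1 ∧ ∃ vj ∈ WeylGroup Φ,
        ⇑vj '' Set.range α = Set.range (Function.update α j (-α₀)) ∧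
        ∀ x, ζ x = vj x + ϖ j)) ∧
    -- `A ∩ P^∨ = {0} ∪ {ϖ_j : α_j minuscule}`
    (alcove α α₀ ∩ coweightLattice Φ
      = insert (0 : V) {x | ∃ j, m j = 1 ∧ x = ϖ j}) ∧
    -- `Ω` acts simply transitively on `A ∩ P^∨`
    (∀ p ∈ alcove α α₀ ∩ coweightLattice Φ,
      ∀ q ∈ alcove α α₀ ∩ coweightLattice Φ,
      ∃! ζ : V ≃ᵃⁱ[ℝ] V, ζ ∈ fundGroup Φ α α₀ ∧ ζ p = q) := by
  refine ⟨fun ζ => ⟨fun hζ => ?_, ?_⟩, AlcoveStab.alcove_inter hα h₀ hϖ, fun p hp q hq => ?_⟩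
  · have h0 := AlcoveStab.fund_image_zero hζ
    rw [AlcoveStab.alcove_inter hα h₀ hϖ] at h0
    rcases h0 with h0 | ⟨j, hj, h0⟩
    · left
      rw [AlcoveStab.fund_zero hΦ hα h₀ hϖ hζ h0]
      exact fun x => rfl
    · right
      obtain ⟨v, hv, hvr⟩ := AlcoveStab.exists_v hΦ hα h₀ hϖ hj
      have he : ζ = AlcoveStab.omega v (ϖ j) := AlcoveStab.fund_ext_zero hΦ hα h₀ hϖ hζ
        (AlcoveStab.fund_of_v hΦ hα h₀ hϖ hj hv hvr (AlcoveStab.omega_apply v _)) (by simp [h0, AlcoveStab.omega_apply])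
      exact ⟨j, hj, v, hv, hvr, fun x => by rw [he, AlcoveStab.omega_apply]⟩
  · rintro (h | ⟨j, hj, v, hv, hvr, h⟩)
    · have : ζ = 1 := AffineIsometryEquiv.ext h
      exact this ▸ AlcoveStab.one_mem_fund
    · exact AlcoveStab.fund_of_v hΦ hα h₀ hϖ hj hv hvr h
  · obtain ⟨a, ha, ha0⟩ := AlcoveStab.exists_fund hΦ hα h₀ hϖ hp
    obtain ⟨b, hb, hb0⟩ := AlcoveStab.exists_fund hΦ hα h₀ hϖ hq
    have hap : a⁻¹ p = 0 := by rw [← ha0]; exact a.symm_apply_apply 0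
    refine ⟨b * a⁻¹, ⟨AlcoveStab.fund_mul hΦ hb (AlcoveStab.fund_inv hΦ ha), ?_⟩, ?_⟩
    · rw [AffineIsometryEquiv.coe_mul, Function.comp_apply, hap, hb0]
    · rintro ζ ⟨hζ, hζp⟩
      rw [eq_mul_inv_iff_mul_eq]
      refine AlcoveStab.fund_ext_zero hΦ hα h₀ hϖ (AlcoveStab.fund_mul hΦ hζ ha) hb ?_
      rw [AffineIsometryEquiv.coe_mul, Function.comp_apply, ha0, hζp, hb0]
end

section
/- The Dirichlet domain of Ω around the origin satisfies {x ∈ A : ‖x‖ ≤ ‖ω(x)‖ for all ω ∈ Ω} = {x ∈ A : ‖x‖ ≤ ‖x − ϖ_j^∨‖ for every minuscule α_j}. -/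
/-!
For `ω ∈ Ω` the linear part of `ω` is an isometry, so `‖ω x‖ = ‖x - ω⁻¹ 0‖`; the theorem thus
amounts to identifying the orbit `Ω · 0` with `{0} ∪ {ϖ j | m j = 1}`.

A point of `Ω · 0` is a coweight lying in the alcove. Its coordinates `k i = ⟪α i, v⟫` are
nonnegative integers with `∑ m i * k i ≤ 1`, so it is `0` or a minuscule `ϖ j`
(`eq_zero_or_eq_coweight`).

Conversely let `m j = 1`. Replacing `α j` by `-α₀` in the base gives another base, whose highest
root is `-α j` with the same coefficients `m` (`BaseData.update`), and `alcove - ϖ j` is the alcove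
of this new base. The Weyl group carries any base to any other, hence some element carries `alcove - ϖ j` to
`alcove` (`exists_weyl_alcove`). Transitivity is used in the following form: an alcove is the set of
points on which every root that is positive at a fixed dominant regular vector `ρ` takes values in
`[0, 1]` (`BaseData.mem_alcove_iff`), and some Weyl group element takes `ρ'` to a vector strictly
dominant for the other base, namely the element maximizing `⟪w ρ', ρ⟫`.
-/

open scoped RealInnerProductSpace

open scoped RealInnerProductSpace

section

variable {V : Type*} [NormedAddCommGroup V] [InnerProductSpace ℝ V]

/-! ### The Weyl group -/

theorem IsRootSystem.inner_self_pos {Φ : Set V} (hΦ : IsRootSystem Φ) {a : V} (ha : a ∈ Φ) :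
    0 < ⟪a, a⟫ :=
  real_inner_self_pos.2 fun h => hΦ.not_zero (h ▸ ha)

theorem IsRootSystem.neg_mem {Φ : Set V} (hΦ : IsRootSystem Φ) {a : V} (ha : a ∈ Φ) :
    -a ∈ Φ := by
  have h := hΦ.refl_mem a ha a ha
  have h2 : reflMap a a = -a := by
    rw [reflMap, mul_div_assoc, div_self (hΦ.inner_self_pos ha).ne']
    module
  rwa [h2] at h

theorem weyl_mem_root {Φ : Set V} (hΦ : IsRootSystem Φ) {w : V ≃ₗᵢ[ℝ] V}
    (hw : w ∈ WeylGroup Φ) : ∀ a ∈ Φ, w a ∈ Φ := by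
  induction hw using Subgroup.closure_induction with
  | mem w hw =>
    obtain ⟨b, hb, h⟩ := hw
    intro a ha
    rw [h]
    exact hΦ.refl_mem b hb a ha
  | one => intro a ha; simpa using ha
  | mul x y _ _ hx hy => intro a ha; exact hx _ (hy a ha)
  | inv x _ hx =>
    intro a ha
    -- An injective self-map of the finite set `Φ` is onto.
    have himg : x '' Φ = Φ := (hΦ.finite.image x).eq_of_subset_of_encard_le
      (Set.image_subset_iff.2 hx) x.injective.injOn.encard_image.ge
    obtain ⟨b, hb, hba⟩ : a ∈ x '' Φ := himg.symm ▸ ha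
    have : x⁻¹ a = b := by
      rw [← hba]
      exact x.symm_apply_apply b
    rwa [this]

theorem finite_weylGroup {Φ : Set V} (hΦ : IsRootSystem Φ) : Finite (WeylGroup Φ) := by
  have := hΦ.finite.to_subtype
  refine Finite.of_injective
    (fun (w : WeylGroup Φ) (a : Φ) => (⟨w.1 a, weyl_mem_root hΦ w.2 a a.2⟩ : Φ)) ?_
  intro w w' h
  apply Subtype.ext
  have : (w.1.toLinearEquiv : V →ₗ[ℝ] V) = w'.1.toLinearEquiv := by
    refine LinearMap.ext_on hΦ.spans fun a ha => ?_
    exact congrArg Subtype.val (congrFun h ⟨a, ha⟩)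
  ext x
  exact LinearMap.congr_fun this x

/-- The reflection `reflMap a` in a root `a` is (realized by) an element of the Weyl group. -/
theorem exists_refl_mem_weyl {Φ : Set V} {a : V} (ha : a ∈ Φ) :
    ∃ s ∈ WeylGroup Φ, ∀ x, s x = reflMap a x := by
  have h : ∀ x, (ℝ ∙ a)ᗮ.reflection x = reflMap a x := by
    intro x
    rw [Submodule.reflection_orthogonal_apply, Submodule.reflection_singleton_apply, reflMap,
      real_inner_self_eq_norm_sq]
    simp only [RCLike.ofReal_real_eq_id, id]
    module
  exact ⟨_, Subgroup.subset_closure ⟨a, ha, h⟩, h⟩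

theorem inner_weyl_left (w : V ≃ₗᵢ[ℝ] V) (x y : V) : ⟪w x, y⟫ = ⟪x, w⁻¹ y⟫ := by
  conv_lhs => rw [← w.apply_symm_apply y]
  exact w.inner_map_map _ _

/-! ### Bases and their alcoves -/

/-- The properties of a base `β` with highest root `β₀ = ∑ m i • β i` that determine the alcove:
every root is a combination of `β` with integer coefficients that either all lie in `[0, m i]` or
all lie in `[-m i, 0]`. -/
structure BaseData (Φ : Set V) {n : ℕ} (β : Fin n → V) (m : Fin n → ℕ) (β₀ : V) : Prop where
  mem : ∀ i, β i ∈ Φ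
  mem₀ : β₀ ∈ Φ
  eq : β₀ = ∑ i, (m i : ℝ) • β i
  comb : ∀ γ ∈ Φ, ∃ c : Fin n → ℤ, γ = ∑ i, (c i : ℝ) • β i ∧
    ((∀ i, 0 ≤ c i ∧ c i ≤ m i) ∨ (∀ i, c i ≤ 0 ∧ -(m i : ℤ) ≤ c i))

theorem BaseData.of_isBase {Φ : Set V} (hΦ : IsRootSystem Φ) {n : ℕ} {α : Fin n → V}
    (hα : IsBase Φ α) {m : Fin n → ℕ} {α₀ : V} (h₀ : IsHighestRoot Φ α m α₀) :
    BaseData Φ α m α₀ where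
  mem := hα.mem
  mem₀ := h₀.mem
  eq := h₀.eq
  comb γ hγ := by
    obtain ⟨c, hc, h⟩ := hα.int_comb γ hγ
    refine ⟨c, hc, ?_⟩
    have h1 := h₀.highest γ hγ c hc
    have h2 := h₀.highest (-γ) (hΦ.neg_mem hγ) (fun i => -c i) (by simp [hc])
    rcases h with h | h
    · exact Or.inl fun i => ⟨h i, h1 i⟩
    · exact Or.inr fun i => ⟨h i, by have := h2 i; omega⟩

/-- Swapping a minuscule simple root `α j` for `-α₀` gives a base with highest root `-α j` and
unchanged coefficients (at `j` the coefficient is `m j = 1` in both cases). -/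
theorem BaseData.update {Φ : Set V} (hΦ : IsRootSystem Φ) {n : ℕ} {α : Fin n → V}
    {m : Fin n → ℕ} {α₀ : V} (h : BaseData Φ α m α₀) {j : Fin n} (hj : m j = 1) :
    BaseData Φ (Function.update α j (-α₀)) m (-α j) where
  mem i := by
    by_cases hi : i = j
    · subst hi
      simpa using hΦ.neg_mem h.mem₀
    · simpa [hi] using h.mem i
  mem₀ := hΦ.neg_mem (h.mem j)
  eq := by
    have : ∀ i, (m i : ℝ) • Function.update α j (-α₀) i
        = (m i : ℝ) • α i - if i = j then α j + α₀ else 0 := by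
      intro i
      by_cases hi : i = j
      · subst hi
        simp [hj]
      · simp [hi]
    simp_rw [this]
    rw [Finset.sum_sub_distrib, ← h.eq]
    simp
  comb γ hγ := by
    obtain ⟨c, hc, hs⟩ := h.comb γ hγ
    -- The coefficients of `∑ c i • α i` after substituting `α j = α₀ - ∑ i ≠ j, m i • α i`.
    refine ⟨fun i => if i = j then -c j else c i - c j * m i, ?_, ?_⟩
    · have : ∀ i, (((if i = j then -c j else c i - c j * m i : ℤ)) : ℝ) •
          Function.update α j (-α₀) i
          = (c i : ℝ) • α i - (c j : ℝ) • ((m i : ℝ) • α i)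
            + if i = j then (c j : ℝ) • α₀ else 0 := by
        intro i
        by_cases hi : i = j
        · subst hi
          simp [hj]
        · simp only [hi, if_false, ne_eq, not_false_eq_true, Function.update_of_ne]
          push_cast
          module
      simp_rw [this]
      rw [Finset.sum_add_distrib, Finset.sum_sub_distrib, ← Finset.smul_sum, ← h.eq, ← hc]
      simp
    · rcases hs with hs | hs
      · have hcj := hs j
        rw [hj] at hcj
        obtain hcj | hcj : c j = 0 ∨ c j = 1 := by omega
        · left
          intro i
          have := hs i
          dsimp only
          split_ifs with hi
          · omega
          · simpa [hcj] using this
        · right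
          intro i
          have := hs i
          dsimp only
          split_ifs with hi
          · subst hi
            omega
          · rw [hcj]
            omega
      · have hcj := hs j
        rw [hj] at hcj
        obtain hcj | hcj : c j = 0 ∨ c j = -1 := by omega
        · right
          intro i
          have := hs i
          dsimp only
          split_ifs with hi
          · omega
          · simpa [hcj] using this
        · left
          intro i
          have := hs i
          dsimp only
          split_ifs with hi
          · subst hi
            omega
          · rw [hcj]
            omega

theorem BaseData.inner_ne_zero {Φ : Set V} (hΦ : IsRootSystem Φ) {n : ℕ} {β : Fin n → V}
    {m : Fin n → ℕ} {β₀ : V} (h : BaseData Φ β m β₀) {ρ : V} (hρ : ∀ i, 0 < ⟪β i, ρ⟫)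
    {γ : V} (hγ : γ ∈ Φ) : ⟪γ, ρ⟫ ≠ 0 := by
  obtain ⟨c, hc, hs⟩ := h.comb γ hγ
  intro h0
  apply hΦ.not_zero
  have hz : ∀ i, c i = 0 := by
    rw [hc, sum_inner] at h0
    simp_rw [real_inner_smul_left] at h0
    intro i
    have hi : (c i : ℝ) * ⟪β i, ρ⟫ = 0 := by
      rcases hs with hs | hs
      · exact (Finset.sum_eq_zero_iff_of_nonneg fun i _ =>
          mul_nonneg (by exact_mod_cast (hs i).1) (hρ i).le).1 h0 i (Finset.mem_univ i)
      · exact (Finset.sum_eq_zero_iff_of_nonpos fun i _ =>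
          mul_nonpos_of_nonpos_of_nonneg (by exact_mod_cast (hs i).1) (hρ i).le).1 h0 i
          (Finset.mem_univ i)
    exact_mod_cast (mul_eq_zero.1 hi).resolve_right (hρ i).ne'
  have : γ = 0 := by simp [hc, hz]
  exact this ▸ hγ

/-- The alcove depends on the base only through the set of roots positive at a regular dominant
vector `ρ`. -/
theorem BaseData.mem_alcove_iff {Φ : Set V} (hΦ : IsRootSystem Φ) {n : ℕ} {β : Fin n → V}
    {m : Fin n → ℕ} {β₀ : V} (h : BaseData Φ β m β₀) {ρ : V} (hρ : ∀ i, 0 < ⟪β i, ρ⟫) (y : V) :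
    y ∈ alcove β β₀ ↔ ∀ γ ∈ Φ, 0 < ⟪γ, ρ⟫ → 0 ≤ ⟪γ, y⟫ ∧ ⟪γ, y⟫ ≤ 1 := by
  constructor
  · rintro ⟨hy, hy₀⟩ γ hγ hpos
    obtain ⟨c, hc, hs⟩ := h.comb γ hγ
    rw [hc, sum_inner] at hpos ⊢
    rw [h.eq, sum_inner] at hy₀
    simp_rw [real_inner_smul_left] at hpos hy₀ ⊢
    rcases hs with hs | hs
    · refine ⟨Finset.sum_nonneg fun i _ =>
        mul_nonneg (by exact_mod_cast (hs i).1) (hy i), le_trans ?_ hy₀⟩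
      exact Finset.sum_le_sum fun i _ =>
        mul_le_mul_of_nonneg_right (by exact_mod_cast (hs i).2) (hy i)
    · refine absurd hpos (not_lt.2 (Finset.sum_nonpos fun i _ => ?_))
      exact mul_nonpos_of_nonpos_of_nonneg (by exact_mod_cast (hs i).1) (hρ i).le
  · intro hy
    refine ⟨fun i => (hy _ (h.mem i) (hρ i)).1, (hy _ h.mem₀ ?_).2⟩
    refine lt_of_le_of_ne ?_ (h.inner_ne_zero hΦ hρ h.mem₀).symm
    rw [h.eq, sum_inner]
    simp_rw [real_inner_smul_left]
    exact Finset.sum_nonneg fun i _ => mul_nonneg (Nat.cast_nonneg _) (hρ i).le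

/-- The Weyl group acts transitively on the alcoves at the origin attached to bases. -/
theorem exists_weyl_alcove {Φ : Set V} (hΦ : IsRootSystem Φ) {n : ℕ} {α β : Fin n → V}
    {m m' : Fin n → ℕ} {α₀ β₀ : V} (hα : BaseData Φ α m α₀) (hβ : BaseData Φ β m' β₀)
    {ρ ρ' : V} (hρ : ∀ i, 0 < ⟪α i, ρ⟫) (hρ' : ∀ i, 0 < ⟪β i, ρ'⟫) :
    ∃ w ∈ WeylGroup Φ, ∀ y, w y ∈ alcove α α₀ ↔ y ∈ alcove β β₀ := by
  have := finite_weylGroup hΦ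
  obtain ⟨⟨w, hw⟩, hmax⟩ := Finite.exists_max (fun w : WeylGroup Φ => ⟪w.1 ρ', ρ⟫)
  have hdom : ∀ i, 0 < ⟪α i, w ρ'⟫ := by
    intro i
    have hne : ⟪α i, w ρ'⟫ ≠ 0 := by
      rw [real_inner_comm, inner_weyl_left, real_inner_comm]
      exact hβ.inner_ne_zero hΦ hρ' (weyl_mem_root hΦ (inv_mem hw) _ (hα.mem i))
    refine lt_of_le_of_ne ?_ hne.symm
    -- Otherwise reflecting in `α i` would increase `⟪w ρ', ρ⟫`.
    obtain ⟨s, hs, hsx⟩ := exists_refl_mem_weyl (hα.mem i)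
    have h1 : ⟪s (w ρ'), ρ⟫ ≤ ⟪w ρ', ρ⟫ := hmax ⟨s * w, mul_mem hs hw⟩
    rw [hsx, reflMap, inner_sub_left, real_inner_smul_left] at h1
    have h2 : 0 ≤ 2 * ⟪α i, w ρ'⟫ / ⟪α i, α i⟫ * ⟪α i, ρ⟫ := by linarith
    have h3 := nonneg_of_mul_nonneg_left h2 (hρ i)
    rw [le_div_iff₀ (hΦ.inner_self_pos (hα.mem i))] at h3
    linarith
  refine ⟨w, hw, fun y => ?_⟩
  rw [hα.mem_alcove_iff hΦ hdom, hβ.mem_alcove_iff hΦ hρ']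
  constructor
  · intro h γ hγ hpos
    have := h (w γ) (weyl_mem_root hΦ hw γ hγ)
    rw [w.inner_map_map, w.inner_map_map] at this
    exact this hpos
  · intro h γ hγ hpos
    rw [real_inner_comm, inner_weyl_left, real_inner_comm] at hpos
    rw [real_inner_comm, inner_weyl_left, real_inner_comm]
    exact h _ (weyl_mem_root hΦ (inv_mem hw) γ hγ) hpos

/-! ### The orbit of the origin -/

theorem weyl_mem_coweightLattice {Φ : Set V} (hΦ : IsRootSystem Φ) {w : V ≃ₗᵢ[ℝ] V}
    (hw : w ∈ WeylGroup Φ) {v : V} (hv : v ∈ coweightLattice Φ) : w v ∈ coweightLattice Φ := by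
  intro a ha
  rw [inner_weyl_left]
  exact hv _ (weyl_mem_root hΦ (inv_mem hw) a ha)

theorem neg_mem_coweightLattice {Φ : Set V} {v : V} (hv : v ∈ coweightLattice Φ) :
    -v ∈ coweightLattice Φ := by
  intro a ha
  obtain ⟨k, hk⟩ := hv a ha
  exact ⟨-k, by simp [inner_neg_left, hk]⟩

theorem coweight_mem_coweightLattice {Φ : Set V} {n : ℕ} {α : Fin n → V} (hα : IsBase Φ α)
    {ϖ : Fin n → V} (hϖ : ∀ i j, ⟪ϖ i, α j⟫ = if i = j then 1 else 0) (j : Fin n) :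
    ϖ j ∈ coweightLattice Φ := by
  intro a ha
  obtain ⟨c, hc, -⟩ := hα.int_comb a ha
  refine ⟨c j, ?_⟩
  rw [hc, inner_sum]
  simp [real_inner_smul_right, hϖ]

theorem IsBase.ext_inner {Φ : Set V} {n : ℕ} {α : Fin n → V} (hα : IsBase Φ α) {x y : V}
    (h : ∀ i, ⟪x, α i⟫ = ⟪y, α i⟫) : x = y := by
  have : innerₛₗ ℝ x = innerₛₗ ℝ y := by
    refine LinearMap.ext_on hα.spans ?_
    rintro _ ⟨i, rfl⟩
    exact h i
  exact ext_inner_right ℝ fun v => LinearMap.congr_fun this v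

/-- The coweights in the fundamental alcove are `0` and the minuscule fundamental coweights. -/
theorem eq_zero_or_eq_coweight {Φ : Set V} {n : ℕ} {α : Fin n → V} (hα : IsBase Φ α)
    {m : Fin n → ℕ} {α₀ : V} (h₀ : IsHighestRoot Φ α m α₀)
    {ϖ : Fin n → V} (hϖ : ∀ i j, ⟪ϖ i, α j⟫ = if i = j then 1 else 0)
    {v : V} (hv : v ∈ coweightLattice Φ) (hvA : v ∈ alcove α α₀) :
    v = 0 ∨ ∃ j, m j = 1 ∧ v = ϖ j := by
  choose k hk using fun i => hv (α i) (hα.mem i)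
  have hk0 : ∀ i, 0 ≤ k i := by
    intro i
    have := hvA.1 i
    rw [real_inner_comm, hk] at this
    exact_mod_cast this
  have hsum : ∑ i, (m i : ℤ) * k i ≤ 1 := by
    have := hvA.2
    rw [h₀.eq, sum_inner] at this
    simp_rw [real_inner_smul_left, real_inner_comm v, hk] at this
    exact_mod_cast this
  have hnn : ∀ i, 0 ≤ (m i : ℤ) * k i := fun i => mul_nonneg (Nat.cast_nonneg _) (hk0 i)
  by_cases hz : ∀ i, k i = 0
  · left
    refine hα.ext_inner fun i => ?_
    simp [hk, hz]
  · right
    push Not at hz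
    obtain ⟨j, hj⟩ := hz
    have hmpos : ∀ i, (0 : ℤ) < m i := fun i => by exact_mod_cast h₀.pos i
    have hkj : 0 < k j := lt_of_le_of_ne (hk0 j) (Ne.symm hj)
    have h1 : (m j : ℤ) * k j ≤ 1 :=
      (Finset.single_le_sum (fun i _ => hnn i) (Finset.mem_univ j)).trans hsum
    have hkj1 : k j = 1 := by nlinarith [hmpos j]
    have hmj : m j = 1 := by
      rw [hkj1] at h1
      have := h₀.pos j
      omega
    refine ⟨j, hmj, hα.ext_inner fun i => ?_⟩
    rw [hϖ, hk]
    by_cases hi : j = i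
    · subst hi
      simp [hkj1]
    · have h2 : (m j : ℤ) * k j + (m i : ℤ) * k i ≤ 1 := by
        rw [← Finset.sum_pair (f := fun i => (m i : ℤ) * k i) hi]
        exact (Finset.sum_le_sum_of_subset_of_nonneg (Finset.subset_univ _)
          fun i _ _ => hnn i).trans hsum
      have h3 : k i = 0 := by
        rw [hmj, hkj1] at h2
        have h4 : (m i : ℤ) * k i ≤ 0 := by push_cast at h2; linarith
        nlinarith [hmpos i, hk0 i]
      simp [hi, h3]

/-- A minuscule coweight `ϖ j` is sent to `0` by some element of `Ω`. -/
theorem exists_fundGroup {Φ : Set V} (hΦ : IsRootSystem Φ) {n : ℕ} {α : Fin n → V}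
    (hα : IsBase Φ α) {m : Fin n → ℕ} {α₀ : V} (h₀ : IsHighestRoot Φ α m α₀)
    {ϖ : Fin n → V} (hϖ : ∀ i j, ⟪ϖ i, α j⟫ = if i = j then 1 else 0)
    {j : Fin n} (hj : m j = 1) :
    ∃ ω ∈ fundGroup Φ α α₀, ∃ w : V ≃ₗᵢ[ℝ] V, ∀ x, ω x = w (x - ϖ j) := by
  have hB := BaseData.of_isBase hΦ hα h₀
  have hα₀ : ∀ i, ⟪ϖ i, α₀⟫ = m i := by
    intro i
    rw [h₀.eq, inner_sum]
    simp [real_inner_smul_right, hϖ]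
  have hsum : ∀ i, ⟪∑ l, ϖ l, α i⟫ = 1 := by
    intro i
    rw [sum_inner]
    simp [hϖ]
  -- The second vector below takes the value `1` on every element of the new base.
  obtain ⟨w, hw, hwA⟩ := exists_weyl_alcove hΦ hB (hB.update hΦ hj)
    (ρ := ∑ l, ϖ l) (ρ' := ∑ l, ϖ l - ((∑ l, (m l : ℝ)) + 1) • ϖ j)
    (fun i => by rw [real_inner_comm, hsum]; exact one_pos)
    (fun i => by
      rw [real_inner_comm, inner_sub_left, real_inner_smul_left]
      by_cases hi : i = j
      · subst hi
        simp [inner_neg_right, hα₀, hj, sum_inner]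
      · simp [hi, hsum, hϖ, Ne.symm hi])
  have hA : ∀ x, x - ϖ j ∈ alcove (Function.update α j (-α₀)) (-α j) ↔ x ∈ alcove α α₀ := by
    intro x
    have e1 : ∀ i, ⟪α i, ϖ j⟫ = if j = i then 1 else 0 := fun i => by rw [real_inner_comm, hϖ]
    have e2 : ⟪α₀, ϖ j⟫ = 1 := by rw [real_inner_comm, hα₀, hj]; simp
    constructor
    · rintro ⟨h1, h2⟩
      refine ⟨fun i => ?_, ?_⟩
      · by_cases hi : i = j
        · subst hi
          rw [inner_neg_left, inner_sub_right, e1] at h2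
          simp at h2
          linarith
        · have := h1 i
          rw [Function.update_of_ne hi, inner_sub_right, e1] at this
          simpa [Ne.symm hi] using this
      · have := h1 j
        rw [Function.update_self, inner_neg_left, inner_sub_right, e2] at this
        linarith
    · rintro ⟨h1, h2⟩
      refine ⟨fun i => ?_, ?_⟩
      · by_cases hi : i = j
        · subst hi
          rw [Function.update_self, inner_neg_left, inner_sub_right, e2]
          linarith
        · rw [Function.update_of_ne hi, inner_sub_right, e1]
          simpa [Ne.symm hi] using h1 i
      · rw [inner_neg_left, inner_sub_right, e1]
        have := h1 j
        simp
        linarith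
  let ω : V ≃ᵃⁱ[ℝ] V :=
    w.toAffineIsometryEquiv.trans (AffineIsometryEquiv.vaddConst ℝ (-(w (ϖ j))))
  have hω : ∀ x, ω x = w x + -(w (ϖ j)) := fun x => rfl
  have hω' : ∀ x, ω x = w (x - ϖ j) := fun x => by rw [hω, map_sub, sub_eq_add_neg]
  have hωA : ∀ x, ω x ∈ alcove α α₀ ↔ x ∈ alcove α α₀ := fun x => by rw [hω', hwA, hA]
  refine ⟨ω, ⟨⟨_, neg_mem_coweightLattice (weyl_mem_coweightLattice hΦ hw
    (coweight_mem_coweightLattice hα hϖ j)), w, hw, hω⟩, ?_⟩, w, hω'⟩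
  ext y
  constructor
  · rintro ⟨x, hx, rfl⟩
    exact (hωA x).2 hx
  · intro hy
    exact ⟨ω.symm y, (hωA _).1 (by simpa using hy), by simp⟩

end

/-! ### The Dirichlet domain -/

theorem statement_12
    {V : Type*} [NormedAddCommGroup V] [InnerProductSpace ℝ V] [FiniteDimensional ℝ V]
    (Φ : Set V) (hΦ : IsRootSystem Φ)
    {n : ℕ} (α : Fin n → V) (hα : IsBase Φ α)
    (m : Fin n → ℕ) (α₀ : V) (h₀ : IsHighestRoot Φ α m α₀)
    (ϖ : Fin n → V) (hϖ : ∀ i j, ⟪ϖ i, α j⟫ = if i = j then 1 else 0) :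
    {x ∈ alcove α α₀ | ∀ ω ∈ fundGroup Φ α α₀, ‖x‖ ≤ ‖ω x‖}
      = {x ∈ alcove α α₀ | ∀ j, m j = 1 → ‖x‖ ≤ ‖x - ϖ j‖} := by
  have h0A : (0 : V) ∈ alcove α α₀ := by simp [alcove]
  ext x
  constructor
  · rintro ⟨hx, h⟩
    refine ⟨hx, fun j hj => ?_⟩
    obtain ⟨ω, hω, w, hw⟩ := exists_fundGroup hΦ hα h₀ hϖ hj
    have := h ω hω
    rwa [hw, w.norm_map] at this
  · rintro ⟨hx, h⟩
    refine ⟨hx, ?_⟩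
    rintro ω ⟨⟨γ, hγ, w, hw, hω⟩, hA⟩
    -- `v = ω⁻¹ 0`, a coweight in the alcove.
    obtain ⟨v, hvA, hv0⟩ : (0 : V) ∈ ω '' alcove α α₀ := by rw [hA]; exact h0A
    have hγv : γ = -w v := by
      rw [hω] at hv0
      exact eq_neg_of_add_eq_zero_right hv0
    have hv : v ∈ coweightLattice Φ := by
      have h1 := weyl_mem_coweightLattice hΦ (inv_mem hw) (neg_mem_coweightLattice hγ)
      have h2 : w⁻¹ (-γ) = v := by
        rw [hγv, neg_neg]
        exact w.symm_apply_apply v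
      rwa [h2] at h1
    have hnorm : ‖ω x‖ = ‖x - v‖ := by
      rw [hω, hγv, ← sub_eq_add_neg, ← map_sub, w.norm_map]
    rw [hnorm]
    rcases eq_zero_or_eq_coweight hα h₀ hϖ hv hvA with rfl | ⟨j, hj, rfl⟩
    · simp
    · exact h j hj
end

section
/- Ω is a normal subgroup of Aut(A), Ω ∩ Aut(D) = {1}, and every element of Aut(A) can be written uniquely as ω ∘ φ with ω ∈ Ω and φ ∈ Aut(D); that is, Aut(A) is the internal semidirect product Ω ⋊ Aut(D). -/
/-!
Let `ζ` be an isometry of the alcove `A`, with linear part `φ` and `ζ 0 = γ`. The alcove is a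
simplex, so `ζ` permutes its vertices (`exists_perm`), hence its barycentric coordinates. These are
`mᵢ⟪αᵢ, x⟫` and `1 - ⟪α₀, x⟫`, so comparing gradients shows that `φ` permutes the wall normals
`αᵢ`, `-α₀` up to factors that are quotients of marks. These factors are rational, while the squared
ratio of two root lengths in an irreducible system is `1`, `2`, `3` or the inverse of one of these
(`len_eq`); so all factors are `1` (`exists_wall_perm`). Comparing constant terms then gives
`γ ∈ P^∨` (`origin_mem`), and since every root is conjugate to a simple one under the Weyl group,
`φ` preserves `Φ` and normalizes `W` (`lin_mem_rootStab`, `weyl_normal`). Therefore `Ω` is the set of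
isometries of `A` whose linear part lies in `W` (`mem_fund`), and it is normal.

For the decomposition, `W` acts transitively on bases, so some `w ∈ W` makes `w φ` preserve the
base (`exists_weyl`); a diagram automorphism preserves `A` (`diag_mem`), and
`ζ = (ζ (w φ)⁻¹) (w φ)` with linear part of the first factor equal to `w⁻¹`. Uniqueness reduces to
`Ω ∩ Aut(D) = {1}`, which holds because an element of `W` preserving the base is trivial
(`eq_one_of_pos`, by the exchange property).
-/

open scoped RealInnerProductSpace

open scoped RealInnerProductSpace

namespace AlcoveAut

/-! ### Reflections and root lengths -/

section Reflections

variable {V : Type*} [NormedAddCommGroup V] [InnerProductSpace ℝ V]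

/-- The reflection `s_a` as a linear isometry. -/
noncomputable def refl (a : V) : V ≃ₗᵢ[ℝ] V := (ℝ ∙ a)ᗮ.reflection

lemma refl_apply (a x : V) : refl a x = x - (2 * ⟪a, x⟫ / ⟪a, a⟫) • a := by
  rw [refl, Submodule.reflection_orthogonal_apply, Submodule.reflection_singleton_apply,
    real_inner_self_eq_norm_sq, neg_sub, two_smul, ← add_smul]
  congr 2
  simp only [RCLike.ofReal_real_eq_id, id]
  ring

lemma refl_eq_reflMap (a x : V) : refl a x = reflMap a x := refl_apply a x

lemma refl_self (a : V) : refl a a = -a :=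
  Submodule.reflection_orthogonalComplement_singleton_eq_neg a

lemma refl_mul_self (a : V) : refl a * refl a = 1 := by
  ext x
  rw [LinearIsometryEquiv.coe_mul, Function.comp_apply, refl]
  exact Submodule.reflection_reflection (ℝ ∙ a)ᗮ x

lemma refl_conj (g : V ≃ₗᵢ[ℝ] V) (a : V) : refl (g a) = g * refl a * g⁻¹ := by
  ext x
  obtain ⟨y, rfl⟩ := g.surjective x
  simp [refl_apply, LinearIsometryEquiv.coe_inv]

lemma refl_neg (a : V) : refl (-a) = refl a := by
  ext x
  rw [refl_apply, refl_apply]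
  simp only [inner_neg_left, inner_neg_right, smul_neg, mul_neg, neg_div, neg_smul, neg_neg]

/-- The group of linear isometries that preserve `Φ`. -/
def rootStab (Φ : Set V) : Subgroup (V ≃ₗᵢ[ℝ] V) where
  carrier := {g | ∀ a, g a ∈ Φ ↔ a ∈ Φ}
  one_mem' := fun _ => Iff.rfl
  mul_mem' := fun {f g} hf hg a => (hf (g a)).trans (hg a)
  inv_mem' := fun {g} hg a => by
    rw [← hg, LinearIsometryEquiv.coe_inv, LinearIsometryEquiv.apply_symm_apply]

lemma mem_rootStab {Φ : Set V} {g : V ≃ₗᵢ[ℝ] V} : g ∈ rootStab Φ ↔ ∀ a, g a ∈ Φ ↔ a ∈ Φ :=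
  Iff.rfl

variable {Φ : Set V} (hΦ : IsRootSystem Φ)
include hΦ

lemma refl_mem_rootStab {a : V} (ha : a ∈ Φ) : refl a ∈ rootStab Φ := by
  have h : ∀ b ∈ Φ, refl a b ∈ Φ := fun b hb => by
    rw [refl_eq_reflMap]; exact hΦ.refl_mem a ha b hb
  intro b
  refine ⟨fun hb => ?_, h b⟩
  have := h _ hb
  rwa [← Function.comp_apply (f := refl a), ← LinearIsometryEquiv.coe_mul, refl_mul_self] at this

lemma weyl_le : WeylGroup Φ ≤ rootStab Φ := by
  refine (Subgroup.closure_le _).2 ?_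
  rintro w ⟨a, ha, hw⟩
  have : w = refl a := by ext x; rw [hw, refl_eq_reflMap]
  rw [this]
  exact refl_mem_rootStab hΦ ha

omit hΦ in
lemma refl_mem_weyl {a : V} (ha : a ∈ Φ) : refl a ∈ WeylGroup Φ :=
  Subgroup.subset_closure ⟨a, ha, refl_eq_reflMap a⟩

omit hΦ in
lemma weyl_normal {g : V ≃ₗᵢ[ℝ] V} (hg : g ∈ rootStab Φ) {w : V ≃ₗᵢ[ℝ] V}
    (hw : w ∈ WeylGroup Φ) : g * w * g⁻¹ ∈ WeylGroup Φ := by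
  induction hw using Subgroup.closure_induction with
  | mem w hw =>
    obtain ⟨a, ha, hw⟩ := hw
    have : w = refl a := by ext x; rw [hw, refl_eq_reflMap]
    rw [this, ← refl_conj]
    exact refl_mem_weyl ((hg a).2 ha)
  | one => simp [one_mem]
  | mul x y _ _ hx hy =>
    have : g * (x * y) * g⁻¹ = (g * x * g⁻¹) * (g * y * g⁻¹) := by group
    rw [this]; exact mul_mem hx hy
  | inv x _ hx =>
    have : g * x⁻¹ * g⁻¹ = (g * x * g⁻¹)⁻¹ := by group
    rw [this]; exact inv_mem hx

lemma finite_rootStab : Finite (rootStab Φ) := by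
  have : Finite Φ := hΦ.finite
  let f : rootStab Φ → (Φ → Φ) := fun g a => ⟨g.1 a, (g.2 a).2 a.2⟩
  refine Finite.of_injective f fun g h hgh => Subtype.ext ?_
  have key : ∀ a ∈ Φ, g.1 a = h.1 a := fun a ha =>
    congrArg Subtype.val (congrFun hgh ⟨a, ha⟩)
  have : g.1.toLinearEquiv.toLinearMap = h.1.toLinearEquiv.toLinearMap :=
    LinearMap.ext_on hΦ.spans key
  ext x
  exact LinearMap.congr_fun this x

lemma neg_root {b : V} (hb : b ∈ Φ) : -b ∈ Φ := by
  rw [← refl_self]; exact (refl_mem_rootStab hΦ hb b).2 hb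

lemma inner_self_pos {a : V} (ha : a ∈ Φ) : 0 < ⟪a, a⟫ :=
  real_inner_self_pos.2 fun h => hΦ.not_zero (h ▸ ha)

/-- By irreducibility, no Weyl orbit of roots is orthogonal to a root. -/
lemma exists_nonorth {a b : V} (ha : a ∈ Φ) (hb : b ∈ Φ) : ∃ w ∈ WeylGroup Φ, ⟪a, w b⟫ ≠ 0 := by
  by_contra! hcon
  refine hΦ.irreducible ⟨{c ∈ Φ | ∀ w ∈ WeylGroup Φ, ⟪c, w b⟫ = 0},
    {c ∈ Φ | ∃ w ∈ WeylGroup Φ, ⟪c, w b⟫ ≠ 0}, ⟨a, ha, hcon⟩,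
    ⟨b, hb, 1, one_mem _, (inner_self_pos hΦ hb).ne'⟩, ?_, ?_⟩
  · ext c
    simp only [Set.mem_union, Set.mem_ofPred_eq]
    constructor
    · rintro (h | h) <;> exact h.1
    · intro hc
      by_cases h : ∀ w ∈ WeylGroup Φ, ⟪c, w b⟫ = 0
      · exact Or.inl ⟨hc, h⟩
      · push Not at h
        exact Or.inr ⟨hc, h⟩
  · rintro c ⟨hc, hcw⟩ d ⟨hd, w, hw, hdw⟩
    -- `s_d w b = w b - k d` with `k ≠ 0`, so `d` lies in the span of the orbit of `b`.
    have h1 := hcw _ (mul_mem (refl_mem_weyl hd) hw)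
    rw [LinearIsometryEquiv.coe_mul, Function.comp_apply, refl_apply, inner_sub_right,
      hcw w hw, inner_smul_right, zero_sub, neg_eq_zero] at h1
    have := inner_self_pos hΦ hd
    rcases mul_eq_zero.1 h1 with h | h
    · exfalso
      have : 2 * ⟪d, w b⟫ / ⟪d, d⟫ ≠ 0 := by positivity
      exact this h
    · exact h

omit hΦ in
/-- Neither `2` nor `3` is a rational square. -/
lemma no_sq {d : ℤ} (hd : 0 < d) (hd4 : d < 4) {x q : ℤ} (hq : 0 < q) (h : x ^ 2 = q ^ 2 * d) :
    d = 1 := by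
  have : q ^ 2 ∣ x ^ 2 := ⟨d, h⟩
  obtain ⟨t, rfl⟩ := (Int.pow_dvd_pow_iff two_ne_zero).1 this
  have ht : t ^ 2 = d := by
    have : q ^ 2 * t ^ 2 = q ^ 2 * d := by rw [← h]; ring
    exact mul_left_cancel₀ (by positivity) this
  have h1 : t < 2 := by nlinarith
  have h2 : -2 < t := by nlinarith
  interval_cases t <;> omega

/-- If the ratio of the lengths of two roots is rational, the roots have the same length:
for roots that are neither orthogonal nor proportional, the squared ratio is a quotient of
two positive integers whose product is at most `3`. -/
lemma len_eq {a b : V} (ha : a ∈ Φ) (hb : b ∈ Φ) {p q : ℕ} (hp : 0 < p) (hq : 0 < q)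
    (h : (p : ℝ) ^ 2 * ⟪a, a⟫ = (q : ℝ) ^ 2 * ⟪b, b⟫) : p = q := by
  obtain ⟨w, hw, hne⟩ := exists_nonorth hΦ ha hb
  have hwb : w b ∈ Φ := (weyl_le hΦ hw b).2 hb
  rw [← w.inner_map_map b b] at h
  generalize w b = b at *
  have hA := inner_self_pos hΦ ha
  have hB := inner_self_pos hΦ hwb
  have hp' : (0 : ℝ) < p := by exact_mod_cast hp
  have hq' : (0 : ℝ) < q := by exact_mod_cast hq
  suffices h' : ⟪a, a⟫ = ⟪b, b⟫ by
    rw [h'] at h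
    have := mul_right_cancel₀ hB.ne' h
    have := (pow_left_inj₀ hp'.le hq'.le two_ne_zero).1 this
    exact_mod_cast this
  obtain ⟨k, hk⟩ := hΦ.crystallographic a ha b hwb
  obtain ⟨l, hl⟩ := hΦ.crystallographic b hwb a ha
  rw [real_inner_comm] at hl
  rw [div_eq_iff hA.ne'] at hk
  rw [div_eq_iff hB.ne'] at hl
  have hkl : (k : ℝ) * ⟪a, a⟫ = l * ⟪b, b⟫ := by rw [← hk, ← hl]
  have hk0 : (k : ℝ) ≠ 0 := by
    rintro h0; rw [h0] at hk; apply hne; linarith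
  have hnorm : ⟪b - ((k : ℝ) / 2) • a, b - ((k : ℝ) / 2) • a⟫ = ⟪b, b⟫ * (1 - k * l / 4) := by
    rw [real_inner_sub_sub_self, inner_smul_right, inner_smul_left, inner_smul_right,
      real_inner_comm a b]
    simp only [conj_trivial]
    have : ⟪a, b⟫ = k * ⟪a, a⟫ / 2 := by linarith
    rw [this]
    linear_combination (-(k : ℝ) / 4) * hkl
  have hkl4 : (k : ℝ) * l ≤ 4 := by
    have h1 := real_inner_self_nonneg (x := b - ((k : ℝ) / 2) • a)
    rw [hnorm] at h1
    have := nonneg_of_mul_nonneg_right h1 hB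
    linarith
  have hklpos : 0 < (k : ℝ) * l := by
    have : (k : ℝ) * l * ⟪b, b⟫ = k ^ 2 * ⟪a, a⟫ := by linear_combination (-(k : ℝ)) * hkl
    have h2 : 0 < (k : ℝ) * l * ⟪b, b⟫ := by rw [this]; positivity
    exact pos_of_mul_pos_left h2 hB.le
  have hklpos' : 0 < k * l := by exact_mod_cast hklpos
  have hkl4' : k * l ≤ 4 := by exact_mod_cast hkl4
  rcases hkl4'.lt_or_eq with hlt | heq
  · have hsq : ((p : ℤ) * l) ^ 2 = (q : ℤ) ^ 2 * (k * l) := by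
      have : ((p : ℝ) * l) ^ 2 = (q : ℝ) ^ 2 * (k * l) := by
        apply mul_right_cancel₀ hA.ne'
        linear_combination (l : ℝ) ^ 2 * h - (q : ℝ) ^ 2 * l * hkl
      exact_mod_cast this
    have h1 := no_sq hklpos' hlt (by exact_mod_cast hq) hsq
    rcases Int.mul_eq_one_iff_eq_one_or_neg_one.1 h1 with ⟨rfl, rfl⟩ | ⟨rfl, rfl⟩ <;>
    · push_cast at hkl; linarith
  · have : (k : ℝ) * l = 4 := by exact_mod_cast heq
    rw [this, div_self (by norm_num), sub_self, mul_zero, inner_self_eq_zero, sub_eq_zero] at hnorm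
    rcases hΦ.reduced a ha (k / 2) (hnorm ▸ hwb) with h1 | h1 <;> rw [h1] at hnorm <;>
      simp [hnorm]

end Reflections

/-! ### Bases of the root system and the Weyl group -/

section Bases

variable {V : Type*} [NormedAddCommGroup V] [InnerProductSpace ℝ V]
  {Φ : Set V} {n : ℕ} {α : Fin n → V}

/-- The fundamental coweights: the basis dual to the base. -/
lemma exists_dual [FiniteDimensional ℝ V] (hα : IsBase Φ α) :
    ∃ ω : Fin n → V, ∀ i j, ⟪α i, ω j⟫ = if i = j then 1 else 0 := by
  let b := Module.Basis.mk hα.indep hα.spans.ge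
  refine ⟨fun j => (InnerProductSpace.toDual ℝ V).symm
    (LinearMap.toContinuousLinearMap (b.coord j)), fun i j => ?_⟩
  rw [real_inner_comm, InnerProductSpace.toDual_symm_apply]
  have : α i = b i := by simp [b]
  rw [this]
  simp [Finsupp.single_apply]

variable (hΦ : IsRootSystem Φ) (hα : IsBase Φ α) {ω : Fin n → V}
  (hω : ∀ i j, ⟪α i, ω j⟫ = if i = j then 1 else 0)

include hα hω

lemma expand (x : V) : x = ∑ i, ⟪x, ω i⟫ • α i := by
  have hx : x ∈ Submodule.span ℝ (Set.range α) := by rw [hα.spans]; trivial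
  obtain ⟨c, rfl⟩ := (Submodule.mem_span_range_iff_exists_fun ℝ).1 hx
  refine Finset.sum_congr rfl fun i _ => ?_
  congr 1
  simp [sum_inner, inner_smul_left, hω]

lemma ext_simple {x y : V} (h : ∀ i, ⟪α i, x⟫ = ⟪α i, y⟫) : x = y := by
  refine ext_inner_left ℝ fun z => ?_
  rw [expand hα hω z]
  simp [sum_inner, inner_smul_left, h]

lemma ext_coord {x y : V} (h : ∀ i, ⟪x, ω i⟫ = ⟪y, ω i⟫) : x = y := by
  rw [expand hα hω x, expand hα hω y]
  simp [h]

lemma coord_int {b : V} (hb : b ∈ Φ) : ∃ c : Fin n → ℤ, (∀ i, ⟪b, ω i⟫ = c i) ∧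
    ((∀ i, 0 ≤ c i) ∨ (∀ i, c i ≤ 0)) := by
  obtain ⟨c, rfl, hc⟩ := hα.int_comb b hb
  refine ⟨c, fun i => ?_, hc⟩
  simp [sum_inner, inner_smul_left, hω]

omit hα in
/-- Pairing a root with `∑ ωⱼ` gives its height; positive roots are those of positive height. -/
lemma height_simple (i : Fin n) : ⟪α i, ∑ j, ω j⟫ = 1 := by
  simp [inner_sum, hω]

lemma coord_nonneg {b : V} (hb : b ∈ Φ) (hpos : 0 ≤ ⟪b, ∑ j, ω j⟫) (i : Fin n) :
    0 ≤ ⟪b, ω i⟫ := by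
  obtain ⟨c, hc, h | h⟩ := coord_int hα hω hb
  · rw [hc]; exact_mod_cast h i
  · have hle : ∀ i ∈ Finset.univ, ⟪b, ω i⟫ ≤ 0 := fun i _ => by rw [hc]; exact_mod_cast h i
    rw [inner_sum] at hpos
    have h0 := (Finset.sum_eq_zero_iff_of_nonpos hle).1
      (le_antisymm (Finset.sum_nonpos hle) hpos)
    exact (h0 i (Finset.mem_univ i)).ge

include hΦ

lemma height_ne {b : V} (hb : b ∈ Φ) : ⟪b, ∑ j, ω j⟫ ≠ 0 := by
  intro h
  have h1 := coord_nonneg hα hω hb h.ge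
  have h2 := coord_nonneg hα hω (neg_root hΦ hb) (by rw [inner_neg_left, h, neg_zero])
  refine hΦ.not_zero ?_
  have : b = 0 := ext_coord hα hω fun i => by
    have := h2 i
    rw [inner_neg_left] at this
    rw [inner_zero_left]
    linarith [h1 i]
  exact this ▸ hb

omit hΦ in
lemma height_ge_one {b : V} (hb : b ∈ Φ) (hpos : 0 < ⟪b, ∑ j, ω j⟫) : 1 ≤ ⟪b, ∑ j, ω j⟫ := by
  obtain ⟨c, hc, -⟩ := coord_int hα hω hb
  have : ⟪b, ∑ j, ω j⟫ = ((∑ j, c j : ℤ) : ℝ) := by simp [inner_sum, hc]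
  rw [this] at hpos ⊢
  have : 0 < ∑ j, c j := by exact_mod_cast hpos
  exact_mod_cast this

/-- A simple reflection makes only one positive root negative. -/
lemma eq_simple {b : V} (hb : b ∈ Φ) (hpos : 0 < ⟪b, ∑ j, ω j⟫) {i : Fin n}
    (hneg : ⟪refl (α i) b, ∑ j, ω j⟫ < 0) : b = α i := by
  have h1 := coord_nonneg hα hω hb hpos.le
  have hsb := neg_root hΦ ((refl_mem_rootStab hΦ (hα.mem i) b).2 hb)
  have h2 := coord_nonneg hα hω hsb (by rw [inner_neg_left]; linarith)
  have hbt : b = ⟪b, ω i⟫ • α i := by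
    refine ext_coord hα hω fun j => ?_
    rw [inner_smul_left, hω]
    split_ifs with hij
    · simp [hij]
    · have := h2 j
      rw [inner_neg_left, refl_apply, inner_sub_left, inner_smul_left, hω, if_neg hij] at this
      simp only [mul_zero, sub_zero] at this ⊢
      linarith [h1 j]
  rcases hΦ.reduced _ (hα.mem i) ⟪b, ω i⟫ (hbt ▸ hb) with h | h
  · rw [hbt, h, one_smul]
  · linarith [h1 i]

/-- Every positive root is the image of a simple root under a product of simple reflections,
by induction on the height. -/
lemma exists_conj_simple (k : ℕ) : ∀ b ∈ Φ, 0 < ⟪b, ∑ j, ω j⟫ → ⟪b, ∑ j, ω j⟫ ≤ k →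
    ∃ (L : List (Fin n)) (i : Fin n), b = (L.map fun j => refl (α j)).prod (α i) := by
  induction k with
  | zero =>
    intro b hb hpos hle
    push_cast at hle
    linarith
  | succ k ih =>
    intro b hb hpos hle
    obtain ⟨i, hi⟩ : ∃ i, 0 < ⟪α i, b⟫ := by
      by_contra! hcon
      have h1 : ⟪b, b⟫ = ∑ i, ⟪b, ω i⟫ * ⟪α i, b⟫ := by
        conv_lhs => rw [expand hα hω b, sum_inner]
        simp only [inner_smul_left, conj_trivial]
        rw [← expand hα hω b]
      have h2 : ⟪b, b⟫ ≤ 0 := by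
        rw [h1]
        exact Finset.sum_nonpos fun i _ =>
          mul_nonpos_of_nonneg_of_nonpos (coord_nonneg hα hω hb hpos.le i) (hcon i)
      linarith [inner_self_pos hΦ hb]
    have hsb := (refl_mem_rootStab hΦ (hα.mem i) b).2 hb
    rcases (height_ne hΦ hα hω hsb).lt_or_gt with hneg | hpos'
    · exact ⟨[], i, by simpa using eq_simple hΦ hα hω hb hpos hneg⟩
    · obtain ⟨c, hc⟩ := hΦ.crystallographic _ (hα.mem i) b hb
      have hA := inner_self_pos hΦ (hα.mem i)
      have hc0 : (0 : ℝ) < c := by rw [← hc]; positivity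
      have hc1 : (1 : ℝ) ≤ c := by
        have : 0 < c := by exact_mod_cast hc0
        exact_mod_cast this
      have hht : ⟪refl (α i) b, ∑ j, ω j⟫ = ⟪b, ∑ j, ω j⟫ - c := by
        rw [refl_apply, inner_sub_left, inner_smul_left, height_simple hω, hc]
        simp
      obtain ⟨L, j, hL⟩ := ih _ hsb hpos' (by rw [hht]; push_cast at hle; linarith)
      refine ⟨i :: L, j, ?_⟩
      rw [List.map_cons, List.prod_cons, LinearIsometryEquiv.coe_mul, Function.comp_apply, ← hL,
        ← Function.comp_apply (f := refl (α i)), ← LinearIsometryEquiv.coe_mul, refl_mul_self]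
      rfl

lemma exists_conj {b : V} (hb : b ∈ Φ) :
    ∃ (L : List (Fin n)) (i : Fin n), refl b =
      refl ((L.map fun j => refl (α j)).prod (α i)) ∧
      (b = (L.map fun j => refl (α j)).prod (α i) ∨
        b = - (L.map fun j => refl (α j)).prod (α i)) := by
  rcases (height_ne hΦ hα hω hb).lt_or_gt with hneg | hpos
  · obtain ⟨k, hk⟩ := exists_nat_ge ⟪-b, ∑ j, ω j⟫
    obtain ⟨L, i, h⟩ := exists_conj_simple hΦ hα hω k (-b) (neg_root hΦ hb)
      (by rw [inner_neg_left]; linarith) hk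
    exact ⟨L, i, by rw [← h, refl_neg], Or.inr (by rw [← h, neg_neg])⟩
  · obtain ⟨k, hk⟩ := exists_nat_ge ⟪b, ∑ j, ω j⟫
    obtain ⟨L, i, h⟩ := exists_conj_simple hΦ hα hω k b hb hpos hk
    exact ⟨L, i, by rw [← h], Or.inl h⟩

omit hω hΦ in
lemma prod_mem_weyl (L : List (Fin n)) : (L.map fun j => refl (α j)).prod ∈ WeylGroup Φ := by
  refine Subgroup.list_prod_mem _ fun g hg => ?_
  obtain ⟨j, -, rfl⟩ := List.mem_map.1 hg
  exact refl_mem_weyl (hα.mem j)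

/-- The Weyl group is generated by the simple reflections. -/
lemma exists_word {w : V ≃ₗᵢ[ℝ] V} (hw : w ∈ WeylGroup Φ) :
    ∃ L : List (Fin n), w = (L.map fun j => refl (α j)).prod := by
  have hinv : ∀ L : List (Fin n), ((L.map fun j => refl (α j)).prod)⁻¹ =
      (L.reverse.map fun j => refl (α j)).prod := fun L => by
    have : ∀ j, (refl (α j))⁻¹ = refl (α j) := fun j => inv_eq_of_mul_eq_one_left (refl_mul_self _)
    rw [List.prod_inv_reverse, List.map_map, List.map_reverse]
    simp [Function.comp_def, this]
  induction hw using Subgroup.closure_induction with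
  | mem w hw =>
    obtain ⟨a, ha, hw⟩ := hw
    have hwa : w = refl a := by ext x; rw [hw, refl_eq_reflMap]
    obtain ⟨L, i, h, -⟩ := exists_conj hΦ hα hω ha
    refine ⟨L ++ [i] ++ L.reverse, ?_⟩
    rw [hwa, h, refl_conj, hinv]
    simp [mul_assoc]
  | one => exact ⟨[], by simp⟩
  | mul x y _ _ hx hy =>
    obtain ⟨L, rfl⟩ := hx
    obtain ⟨M, rfl⟩ := hy
    exact ⟨L ++ M, by simp⟩
  | inv x _ hx =>
    obtain ⟨L, rfl⟩ := hx
    exact ⟨L.reverse, hinv L⟩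

/-- The exchange property. -/
lemma exchange (L : List (Fin n)) (j : Fin n)
    (hneg : ⟪(L.map fun j => refl (α j)).prod (α j), ∑ j, ω j⟫ < 0) :
    ∃ M : List (Fin n), M.length + 1 = L.length ∧
      (L.map fun j => refl (α j)).prod * refl (α j) = (M.map fun j => refl (α j)).prod := by
  induction L with
  | nil =>
    have := height_simple hω j
    simp only [List.map_nil, List.prod_nil, LinearIsometryEquiv.coe_one, id] at hneg
    linarith
  | cons i L ih =>
    rw [List.map_cons, List.prod_cons] at hneg ⊢
    have hb := (weyl_le hΦ (prod_mem_weyl hα L) (α j)).2 (hα.mem j)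
    rcases (height_ne hΦ hα hω hb).lt_or_gt with h | h
    · obtain ⟨M, hM, h⟩ := ih h
      exact ⟨i :: M, by simp [hM], by rw [mul_assoc, h]; simp⟩
    · have := eq_simple hΦ hα hω hb h hneg
      refine ⟨L, by simp, ?_⟩
      have h2 := refl_conj (L.map fun j => refl (α j)).prod (α j)
      rw [this, eq_mul_inv_iff_mul_eq] at h2
      rw [mul_assoc, ← h2, ← mul_assoc, refl_mul_self, one_mul]

/-- An element of the Weyl group that keeps every simple root positive is trivial. -/
lemma eq_one_of_pos {w : V ≃ₗᵢ[ℝ] V} (hw : w ∈ WeylGroup Φ)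
    (hpos : ∀ i, 0 < ⟪w (α i), ∑ j, ω j⟫) : w = 1 := by
  obtain ⟨L, rfl⟩ := exists_word hΦ hα hω hw
  clear hw
  induction hk : L.length using Nat.strong_induction_on generalizing L with
  | _ k ih =>
    rcases L.eq_nil_or_concat with rfl | ⟨L, j, rfl⟩
    · simp
    · have hprod : ((L ++ [j]).map fun j => refl (α j)).prod =
          (L.map fun j => refl (α j)).prod * refl (α j) := by simp
      rw [List.concat_eq_append] at *
      have hneg : ⟪(L.map fun j => refl (α j)).prod (α j), ∑ j, ω j⟫ < 0 := by
        have := hpos j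
        rw [hprod, LinearIsometryEquiv.coe_mul, Function.comp_apply, refl_self, map_neg,
          inner_neg_left] at this
        linarith
      obtain ⟨M, hM, h⟩ := exchange hΦ hα hω L j hneg
      rw [hprod, h] at hpos ⊢
      exact ih M.length (by simp at hk; omega) M hpos rfl

/-- A symmetry of `Φ` that keeps the simple roots positive permutes them: neither it nor its
inverse lowers heights of positive roots, so it preserves height, and the simple roots are the
roots of height `1`. -/
lemma perm_of_pos {g : V ≃ₗᵢ[ℝ] V} (hg : g ∈ rootStab Φ)
    (hpos : ∀ i, 0 < ⟪g (α i), ∑ j, ω j⟫) : ⇑g '' Set.range α = Set.range α := by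
  have hge : ∀ b ∈ Φ, 0 < ⟪b, ∑ j, ω j⟫ → ⟪b, ∑ j, ω j⟫ ≤ ⟪g b, ∑ j, ω j⟫ := fun b hb hbp => by
    have h1 : ⟪g b, ∑ j, ω j⟫ = ∑ i, ⟪b, ω i⟫ * ⟪g (α i), ∑ j, ω j⟫ := by
      conv_lhs => rw [expand hα hω b, map_sum, sum_inner]
      simp [inner_smul_left]
    rw [h1, inner_sum]
    refine Finset.sum_le_sum fun i _ => le_mul_of_one_le_right (coord_nonneg hα hω hb hbp.le i) ?_
    exact height_ge_one hα hω ((hg _).2 (hα.mem i)) (hpos i)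
  have hmem : ∀ i, g.symm (α i) ∈ Φ := fun i => by
    rw [← hg, LinearIsometryEquiv.apply_symm_apply]; exact hα.mem i
  have hsub : ∀ i, ∃ j, g.symm (α i) = α j := fun i => by
    have hp : 0 < ⟪g.symm (α i), ∑ j, ω j⟫ := by
      refine (height_ne hΦ hα hω (hmem i)).lt_or_gt.resolve_left fun h => ?_
      have := hge _ (neg_root hΦ (hmem i)) (by rw [inner_neg_left]; linarith)
      rw [map_neg, LinearIsometryEquiv.apply_symm_apply, inner_neg_left, inner_neg_left,
        height_simple hω] at this
      linarith
    have h1 := hge _ (hmem i) hp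
    rw [LinearIsometryEquiv.apply_symm_apply, height_simple hω] at h1
    have h0 := coord_nonneg hα hω (hmem i) hp.le
    obtain ⟨c, hc, -⟩ := coord_int hα hω (hmem i)
    obtain ⟨j, hj⟩ : ∃ j, ⟪g.symm (α i), ω j⟫ ≠ 0 := by
      by_contra! hcon
      rw [inner_sum] at hp
      simp [hcon] at hp
    have hj1 : 1 ≤ ⟪g.symm (α i), ω j⟫ := by
      have : 0 < c j := by
        have := lt_of_le_of_ne (h0 j) hj.symm
        rw [hc] at this
        exact_mod_cast this
      rw [hc]
      exact_mod_cast this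
    refine ⟨j, ext_coord hα hω fun l => ?_⟩
    rw [inner_sum, ← Finset.add_sum_erase _ _ (Finset.mem_univ j)] at h1
    have hs : 0 ≤ ∑ x ∈ Finset.univ.erase j, ⟪g.symm (α i), ω x⟫ :=
      Finset.sum_nonneg fun x _ => h0 x
    have hs0 : ∑ x ∈ Finset.univ.erase j, ⟪g.symm (α i), ω x⟫ = 0 := by linarith
    rw [hω]
    split_ifs with h
    · rw [← h]; linarith
    · exact (Finset.sum_eq_zero_iff_of_nonneg fun x _ => h0 x).1 hs0 l (by simp [Ne.symm h])
  choose τ hτ using hsub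
  have hinj : Function.Injective τ := fun i j hij => by
    apply hα.indep.injective
    apply g.symm.injective
    rw [hτ, hτ, hij]
  have hgτ : ∀ i, g (α (τ i)) = α i := fun i => by
    rw [← hτ, LinearIsometryEquiv.apply_symm_apply]
  ext x
  simp only [Set.mem_image, Set.mem_range, exists_exists_eq_and]
  constructor
  · rintro ⟨i, rfl⟩
    obtain ⟨j, rfl⟩ := (Finite.injective_iff_surjective.1 hinj) i
    exact ⟨j, (hgτ j).symm⟩
  · rintro ⟨i, rfl⟩
    exact ⟨τ i, hgτ i⟩

omit hΦ in
/-- A diagram automorphism fixes `∑ ωⱼ`, the vector that computes heights. -/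
lemma diag_height {g : V ≃ₗᵢ[ℝ] V} (hg : ⇑g '' Set.range α = Set.range α) :
    g (∑ j, ω j) = ∑ j, ω j := by
  refine ext_simple hα hω fun i => ?_
  have : α i ∈ ⇑g '' Set.range α := by rw [hg]; exact Set.mem_range_self i
  obtain ⟨_, ⟨j, rfl⟩, hj⟩ := this
  conv_lhs => rw [← hj]
  rw [g.inner_map_map, height_simple hω, height_simple hω]

/-- The Weyl group carries every base of the form `g(Π)` back to `Π`: the required `w`
maximizes the pairing of `w g (∑ ωⱼ)` with `∑ ωⱼ`. -/
lemma exists_weyl {g : V ≃ₗᵢ[ℝ] V} (hg : g ∈ rootStab Φ) :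
    ∃ w ∈ WeylGroup Φ, (w * g) '' Set.range α = Set.range α := by
  have := finite_rootStab hΦ
  have : Finite (WeylGroup Φ) := Finite.of_injective _ (Subgroup.inclusion_injective (weyl_le hΦ))
  obtain ⟨w, hmax⟩ := Finite.exists_max
    fun w : WeylGroup Φ => ⟪w.1 (g (∑ j, ω j)), ∑ j, ω j⟫
  have hwg : w.1 * g ∈ rootStab Φ := mul_mem (weyl_le hΦ w.2) hg
  refine ⟨w.1, w.2, ?_⟩
  have hsymm : ∀ i, (w.1 * g).symm (α i) ∈ Φ := fun i => by
    rw [← hwg, LinearIsometryEquiv.apply_symm_apply]; exact hα.mem i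
  have hinv : ⇑(w.1 * g)⁻¹ '' Set.range α = Set.range α := by
    refine perm_of_pos hΦ hα hω (inv_mem hwg) fun i => ?_
    rw [LinearIsometryEquiv.coe_inv]
    refine lt_of_le_of_ne ?_ (height_ne hΦ hα hω (hsymm i)).symm
    -- Maximality against `s_i w` gives `⟪α i, w g (∑ ωⱼ)⟫ ≥ 0`.
    have h1 := hmax (⟨refl (α i), refl_mem_weyl (hα.mem i)⟩ * w)
    have h2 : ⟪(w.1 * g).symm (α i), ∑ j, ω j⟫ = ⟪α i, w.1 (g (∑ j, ω j))⟫ := by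
      rw [← (w.1 * g).inner_map_map, LinearIsometryEquiv.apply_symm_apply]; rfl
    rw [h2]
    simp only [Subgroup.coe_mul, LinearIsometryEquiv.coe_mul, Function.comp_apply, refl_apply,
      inner_sub_left, inner_smul_left, height_simple hω, conj_trivial, mul_one] at h1
    have hA := inner_self_pos hΦ (hα.mem i)
    have h3 : 0 ≤ 2 * ⟪α i, w.1 (g (∑ j, ω j))⟫ / ⟪α i, α i⟫ := by linarith
    by_contra! hneg
    exact h3.not_gt (div_neg_of_neg_of_pos (by linarith) hA)
  have : (w.1 * g) '' (⇑(w.1 * g)⁻¹ '' Set.range α) = Set.range α := by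
    rw [← Set.image_comp, ← LinearIsometryEquiv.coe_mul, mul_inv_cancel]
    simp
  rwa [hinv] at this

end Bases

/-! ### Isometries of the alcove -/

section Alcove

variable {V : Type*} [NormedAddCommGroup V] [InnerProductSpace ℝ V]

/-- The linear part of an affine isometry. -/
noncomputable def lin : (V ≃ᵃⁱ[ℝ] V) →* (V ≃ₗᵢ[ℝ] V) where
  toFun ζ := ζ.linearIsometryEquiv
  map_one' := rfl
  map_mul' _ _ := rfl

lemma lin_spec (ζ : V ≃ᵃⁱ[ℝ] V) (x : V) : ζ x = lin ζ x + ζ 0 := by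
  have : ζ (x + 0) = lin ζ x + ζ 0 := ζ.map_vadd 0 x
  rwa [add_zero] at this

lemma lin_linear (g : V ≃ₗᵢ[ℝ] V) : lin g.toAffineIsometryEquiv = g := by
  ext x; rfl

/-- The group `Aut(A)`. -/
def alcAut {n : ℕ} (α : Fin n → V) (α₀ : V) : Subgroup (V ≃ᵃⁱ[ℝ] V) where
  carrier := {ζ | ∀ x, ζ x ∈ alcove α α₀ ↔ x ∈ alcove α α₀}
  one_mem' := fun _ => Iff.rfl
  mul_mem' := fun {f g} hf hg a => (hf (g a)).trans (hg a)
  inv_mem' := fun {g} hg a => by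
    rw [← hg, AffineIsometryEquiv.coe_inv, AffineIsometryEquiv.apply_symm_apply]

variable {Φ : Set V} {n : ℕ} {α : Fin n → V} {m : Fin n → ℕ} {α₀ : V}

lemma mem_alcAut {ζ : V ≃ᵃⁱ[ℝ] V} :
    ζ ∈ alcAut α α₀ ↔ ⇑ζ '' alcove α α₀ = alcove α α₀ := by
  constructor
  · intro h
    ext x
    constructor
    · rintro ⟨y, hy, rfl⟩
      exact (h y).2 hy
    · intro hx
      refine ⟨ζ.symm x, ?_, ζ.apply_symm_apply x⟩
      rwa [← h, ζ.apply_symm_apply]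
  · intro h x
    conv_lhs => rw [← h]
    exact ζ.injective.mem_set_image

/-- The simple roots, together with `-α₀` at the index `none`: the inner normals of the walls
of the alcove. -/
def wall (α : Fin n → V) (α₀ : V) : Option (Fin n) → V := fun o => o.elim (-α₀) α

/-- The coefficients of the linear relation among the wall normals. -/
def mark (m : Fin n → ℕ) : Option (Fin n) → ℕ := fun o => o.elim 1 m

/-- The barycentric coordinates with respect to the vertices of the alcove. -/
noncomputable def bary (α : Fin n → V) (m : Fin n → ℕ) (α₀ : V) (o : Option (Fin n)) (x : V) : ℝ :=
  (if o = none then 1 else 0) + mark m o * ⟪wall α α₀ o, x⟫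

/-- The vertices of the alcove: `0` and `ωⱼ / mⱼ`. -/
noncomputable def vert (m : Fin n → ℕ) (ω : Fin n → V) : Option (Fin n) → V :=
  fun o => o.elim 0 fun j => (m j : ℝ)⁻¹ • ω j

variable (hΦ : IsRootSystem Φ) (hα : IsBase Φ α) (h₀ : IsHighestRoot Φ α m α₀) {ω : Fin n → V}
  (hω : ∀ i j, ⟪α i, ω j⟫ = if i = j then 1 else 0)

include h₀

lemma mark_pos (o : Option (Fin n)) : 0 < mark m o := by
  cases o with
  | none => exact one_pos
  | some i => exact h₀.pos i

lemma mem_alcove {x : V} : x ∈ alcove α α₀ ↔ ∀ o, 0 ≤ bary α m α₀ o x := by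
  rw [Option.forall, and_comm]
  refine and_congr (forall_congr' fun i => ?_) ?_
  · have : (0 : ℝ) < m i := by exact_mod_cast h₀.pos i
    simp [bary, mark, wall, this]
  · simp [bary, mark, wall]

lemma bary_sum (x : V) : ∑ o, bary α m α₀ o x = 1 := by
  have : ⟪α₀, x⟫ = ∑ i, (m i : ℝ) * ⟪α i, x⟫ := by
    conv_lhs => rw [h₀.eq]
    simp [sum_inner, inner_smul_left]
  simp [Fintype.sum_option, bary, mark, wall, this]

include hω

lemma bary_vert (o p : Option (Fin n)) :
    bary α m α₀ o (vert m ω p) = if o = p then 1 else 0 := by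
  have hm : ∀ i, (m i : ℝ) ≠ 0 := fun i => by exact_mod_cast (h₀.pos i).ne'
  have h1 : ∀ j, ⟪α₀, ω j⟫ = m j := fun j => by
    conv_lhs => rw [h₀.eq]
    simp [sum_inner, inner_smul_left, hω]
  rcases o with _ | i <;> rcases p with _ | j
  · simp [bary, vert]
  · simp [bary, vert, mark, wall, inner_smul_right, h1, hm]
  · simp [bary, vert]
  · simp only [bary, vert, mark, wall, Option.elim, inner_smul_right, hω, Option.some.injEq]
    split_ifs with hij <;> simp_all

include hα

lemma bary_expand (x : V) : x = ∑ o, bary α m α₀ o x • vert m ω o := by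
  have hm : ∀ i, (m i : ℝ) ≠ 0 := fun i => by exact_mod_cast (h₀.pos i).ne'
  refine ext_simple hα hω fun i => ?_
  simp [Fintype.sum_option, bary, mark, wall, vert, inner_sum, inner_smul_right, hω]
  field_simp [hm i]

lemma bary_interp (ζ : V ≃ᵃⁱ[ℝ] V) (o : Option (Fin n)) (x : V) :
    bary α m α₀ o (ζ x) = ∑ p, bary α m α₀ p x * bary α m α₀ o (ζ (vert m ω p)) := by
  have h1 := bary_sum h₀ x
  have h2 : lin ζ x = ∑ p, bary α m α₀ p x • lin ζ (vert m ω p) := by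
    conv_lhs => rw [bary_expand hα h₀ hω x]
    simp
  have h3 : ∀ p, bary α m α₀ p x * bary α m α₀ o (ζ (vert m ω p)) =
      bary α m α₀ p x * bary α m α₀ o (ζ 0) +
        mark m o * ⟪wall α α₀ o, bary α m α₀ p x • lin ζ (vert m ω p)⟫ := fun p => by
    rw [lin_spec ζ (vert m ω p)]
    simp only [bary, inner_add_right, inner_smul_right]
    ring
  rw [Finset.sum_congr rfl fun p _ => h3 p, Finset.sum_add_distrib, ← Finset.sum_mul, h1,
    ← Finset.mul_sum, ← inner_sum, ← h2, lin_spec ζ x]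
  simp only [bary, inner_add_right]
  ring

/-- An isometry of the alcove permutes its vertices: the matrices of barycentric coordinates of
the images of the vertices under `ζ` and `ζ⁻¹` are nonnegative and mutually inverse. -/
lemma exists_perm {ζ : V ≃ᵃⁱ[ℝ] V} (hζ : ζ ∈ alcAut α α₀) :
    ∃ σ : Option (Fin n) → Option (Fin n), Function.Bijective σ ∧
      ∀ i j, bary α m α₀ i (ζ (vert m ω j)) = if i = σ j then 1 else 0 := by
  have hv : ∀ j, vert m ω j ∈ alcove α α₀ := fun j => by
    rw [mem_alcove h₀]
    intro o
    rw [bary_vert h₀ hω]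
    split_ifs <;> norm_num
  have hM : ∀ ξ ∈ alcAut α α₀, ∀ i j, 0 ≤ bary α m α₀ i (ξ (vert m ω j)) := fun ξ hξ i j =>
    (mem_alcove h₀).1 ((hξ _).2 (hv j)) i
  have hinv : ∀ x, ζ⁻¹ (ζ x) = x := fun x => by simp [AffineIsometryEquiv.coe_inv]
  have hinv' : ∀ x, ζ (ζ⁻¹ x) = x := fun x => by simp [AffineIsometryEquiv.coe_inv]
  have hex : ∀ j, ∃ k, ∀ i, bary α m α₀ i (ζ (vert m ω j)) = if i = k then 1 else 0 := by
    intro j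
    obtain ⟨k, hk⟩ : ∃ k, bary α m α₀ j (ζ⁻¹ (vert m ω k)) ≠ 0 := by
      by_contra! hcon
      have h1 := bary_interp hα h₀ hω ζ⁻¹ j (ζ (vert m ω j))
      rw [hinv, bary_vert h₀ hω] at h1
      simp only [hcon, mul_zero, Finset.sum_const_zero, if_true] at h1
      exact one_ne_zero h1
    have hz : ∀ i, i ≠ k → bary α m α₀ i (ζ (vert m ω j)) = 0 := fun i hik => by
      have h1 := bary_interp hα h₀ hω ζ i (ζ⁻¹ (vert m ω k))
      rw [hinv', bary_vert h₀ hω, if_neg hik] at h1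
      have h2 := (Finset.sum_eq_zero_iff_of_nonneg fun p _ =>
        mul_nonneg (hM _ (inv_mem hζ) p k) (hM _ hζ i p)).1 h1.symm j (Finset.mem_univ j)
      exact (mul_eq_zero.1 h2).resolve_left hk
    refine ⟨k, fun i => ?_⟩
    split_ifs with hik
    · have h1 := bary_sum h₀ (ζ (vert m ω j))
      rw [Finset.sum_eq_single k (fun i _ h => hz i h) (by simp)] at h1
      rw [hik, h1]
    · exact hz i hik
  choose σ hσ using hex
  refine ⟨σ, Finite.injective_iff_bijective.1 fun j j' hj => ?_, fun i j => hσ j i⟩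
  by_contra hne
  have h1 := bary_interp hα h₀ hω ζ⁻¹ j (ζ (vert m ω j))
  have h2 := bary_interp hα h₀ hω ζ⁻¹ j (ζ (vert m ω j'))
  simp only [hσ, ← hj, hinv, bary_vert h₀ hω] at h1 h2
  rw [← h1] at h2
  simp [hne] at h2

include hΦ

/-- The linear part of an isometry of the alcove permutes the wall normals. A vertex permutation
gives the normals up to rational factors, which are trivial by `len_eq`. -/
lemma exists_wall_perm {ζ : V ≃ᵃⁱ[ℝ] V} (hζ : ζ ∈ alcAut α α₀) :
    ∃ σ : Option (Fin n) → Option (Fin n), Function.Bijective σ ∧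
      (∀ o, lin ζ (wall α α₀ o) = wall α α₀ (σ o)) ∧
      ∀ o, ∃ k : ℤ, ⟪wall α α₀ (σ o), ζ 0⟫ = k := by
  obtain ⟨σ, hσ, h⟩ := exists_perm hα h₀ hω hζ
  have hwall : ∀ o, wall α α₀ o ∈ Φ := by
    rintro (_ | i)
    · exact neg_root hΦ h₀.mem
    · exact hα.mem i
  have hb : ∀ o x, bary α m α₀ (σ o) (ζ x) = bary α m α₀ o x := fun o x => by
    rw [bary_interp hα h₀ hω ζ]
    simp [h, hσ.1.eq_iff]
  have h0 : ∀ o, bary α m α₀ (σ o) (ζ 0) = if o = none then 1 else 0 := fun o => by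
    rw [hb]; simp [bary]
  have hL : ∀ o, (mark m (σ o) : ℝ) • wall α α₀ (σ o) = (mark m o : ℝ) • lin ζ (wall α α₀ o) := by
    intro o
    refine ext_inner_right ℝ fun y => ?_
    obtain ⟨x, rfl⟩ := (lin ζ).surjective y
    have h1 := hb o x
    have h2 := h0 o
    rw [lin_spec] at h1
    simp only [bary, inner_add_right] at h1 h2
    rw [inner_smul_left, inner_smul_left, (lin ζ).inner_map_map]
    simp only [conj_trivial]
    linarith
  have hmark : ∀ o, mark m (σ o) = mark m o := fun o => by
    refine len_eq hΦ (hwall (σ o)) (hwall o) (mark_pos h₀ _) (mark_pos h₀ _) ?_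
    have h1 : ⟪(mark m (σ o) : ℝ) • wall α α₀ (σ o), (mark m (σ o) : ℝ) • wall α α₀ (σ o)⟫ =
      ⟪(mark m o : ℝ) • lin ζ (wall α α₀ o), (mark m o : ℝ) • lin ζ (wall α α₀ o)⟫ := by rw [hL]
    simp only [inner_smul_left, inner_smul_right, (lin ζ).inner_map_map, conj_trivial] at h1
    linarith
  refine ⟨σ, hσ, fun o => ?_, fun o => ?_⟩
  · have h1 := hL o
    rw [hmark] at h1
    have : (mark m o : ℝ) ≠ 0 := by exact_mod_cast (mark_pos h₀ o).ne'
    exact (smul_right_injective V this h1).symm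
  · have h1 := h0 o
    rw [bary, hmark] at h1
    by_cases ho : o = none
    · have hmo : mark m o = 1 := by rw [ho]; rfl
      rw [hmo, if_pos ho] at h1
      by_cases hs : σ o = none
      · exact ⟨0, by simpa [hs] using h1⟩
      · exact ⟨1, by simpa [hs] using h1⟩
    · rw [if_neg ho] at h1
      by_cases hs : σ o = none
      · have hmo : mark m o = 1 := by rw [← hmark, hs]; rfl
        rw [hmo, if_pos hs] at h1
        refine ⟨-1, ?_⟩
        push_cast at h1 ⊢
        linarith
      · have : (mark m o : ℝ) ≠ 0 := by exact_mod_cast (mark_pos h₀ o).ne'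
        exact ⟨0, by simpa [hs, this] using h1⟩

lemma lin_mem_rootStab {ζ : V ≃ᵃⁱ[ℝ] V} (hζ : ζ ∈ alcAut α α₀) : lin ζ ∈ rootStab Φ := by
  have key : ∀ ξ ∈ alcAut α α₀, ∀ b ∈ Φ, lin ξ b ∈ Φ := by
    intro ξ hξ b hb
    obtain ⟨σ, -, hσ, -⟩ := exists_wall_perm hΦ hα h₀ hω hξ
    have hs : ∀ i, lin ξ (α i) ∈ Φ := fun i => by
      have : lin ξ (α i) = wall α α₀ (σ (some i)) := hσ (some i)
      rw [this]
      rcases σ (some i) with _ | j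
      · exact neg_root hΦ h₀.mem
      · exact hα.mem j
    have hL : ∀ (L : List (Fin n)) (i : Fin n),
        lin ξ ((L.map fun j => refl (α j)).prod (α i)) ∈ Φ := by
      intro L i
      induction L with
      | nil => simpa using hs i
      | cons j L ih =>
        have := (refl_mem_rootStab hΦ (hs j) _).2 ih
        rw [refl_conj] at this
        simpa [LinearIsometryEquiv.coe_inv] using this
    obtain ⟨L, i, -, h | h⟩ := exists_conj hΦ hα hω hb
    · rw [h]; exact hL L i
    · rw [h, map_neg]; exact neg_root hΦ (hL L i)
  intro b
  refine ⟨fun hb => ?_, key ζ hζ b⟩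
  have := key _ (inv_mem hζ) _ hb
  rwa [map_inv, LinearIsometryEquiv.coe_inv, LinearIsometryEquiv.symm_apply_apply] at this

lemma origin_mem {ζ : V ≃ᵃⁱ[ℝ] V} (hζ : ζ ∈ alcAut α α₀) : ζ 0 ∈ coweightLattice Φ := by
  obtain ⟨σ, hσ, -, hint⟩ := exists_wall_perm hΦ hα h₀ hω hζ
  have hs : ∀ i, ∃ k : ℤ, ⟪α i, ζ 0⟫ = k := fun i => by
    obtain ⟨o, ho⟩ := hσ.2 (some i)
    have := hint o
    rwa [ho] at this
  choose k hk using hs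
  intro b hb
  obtain ⟨c, rfl, -⟩ := hα.int_comb b hb
  refine ⟨∑ i, c i * k i, ?_⟩
  rw [real_inner_comm]
  simp [sum_inner, inner_smul_left, hk]

/-- `Ω` consists of the isometries of the alcove whose linear part lies in the Weyl group: the
condition on the translation part is automatic. -/
lemma mem_fund {ζ : V ≃ᵃⁱ[ℝ] V} :
    ζ ∈ fundGroup Φ α α₀ ↔ ζ ∈ alcAut α α₀ ∧ lin ζ ∈ WeylGroup Φ := by
  constructor
  · rintro ⟨⟨γ, -, w, hw, h⟩, hA⟩
    refine ⟨mem_alcAut.2 hA, ?_⟩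
    have h0 : ζ 0 = γ := by rw [h, map_zero, zero_add]
    have : lin ζ = w := by
      ext x
      have := lin_spec ζ x
      rw [h x, h0] at this
      exact (add_right_cancel this).symm
    rwa [this]
  · rintro ⟨hA, hw⟩
    exact ⟨⟨ζ 0, origin_mem hΦ hα h₀ hω hA, lin ζ, hw, lin_spec ζ⟩, mem_alcAut.1 hA⟩

omit hΦ in
lemma diag_mem {g : V ≃ₗᵢ[ℝ] V} (hg : ⇑g '' Set.range α = Set.range α)
    (hgΦ : g ∈ rootStab Φ) : g.toAffineIsometryEquiv ∈ alcAut α α₀ := by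
  have hmem : g α₀ ∈ Φ := (hgΦ _).2 h₀.mem
  -- The coordinates of `g α₀` are at most those of `α₀`, and both have the same sum.
  have hfix : g α₀ = α₀ := by
    have hc₀ : ∀ j, ⟪α₀, ω j⟫ = m j := fun j => by
      conv_lhs => rw [h₀.eq]
      simp [sum_inner, inner_smul_left, hω]
    obtain ⟨c, hc, -⟩ := coord_int hα hω hmem
    have hle : ∀ j ∈ Finset.univ, ⟪g α₀, ω j⟫ ≤ ⟪α₀, ω j⟫ := fun j _ => by
      have h1 := h₀.highest _ hmem c (by
        conv_lhs => rw [expand hα hω (g α₀)]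
        simp [hc]) j
      rw [hc, hc₀]
      exact_mod_cast h1
    have hsum : ∑ j, ⟪g α₀, ω j⟫ = ∑ j, ⟪α₀, ω j⟫ := by
      rw [← inner_sum, ← inner_sum]
      conv_lhs => rw [← diag_height hα hω hg]
      rw [g.inner_map_map]
    exact ext_coord hα hω fun j =>
      (Finset.sum_eq_sum_iff_of_le hle).1 hsum j (Finset.mem_univ j)
  intro x
  have h1 : ⟪α₀, g x⟫ = ⟪α₀, x⟫ := by
    conv_lhs => rw [← hfix]
    rw [g.inner_map_map]
  have h2 : (∀ i, 0 ≤ ⟪α i, g x⟫) ↔ ∀ i, 0 ≤ ⟪α i, x⟫ := by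
    have e1 : (∀ i, 0 ≤ ⟪α i, g x⟫) ↔ ∀ a ∈ Set.range α, 0 ≤ ⟪a, g x⟫ := by simp
    have e2 : (∀ i, 0 ≤ ⟪α i, x⟫) ↔ ∀ a ∈ Set.range α, 0 ≤ ⟪a, x⟫ := by simp
    rw [e1, e2]
    conv_lhs => rw [← hg]
    simp [g.inner_map_map]
  show _ ∧ _ ↔ _ ∧ _
  exact and_congr h2 (by rw [← h1]; rfl)

/-- `Ω` meets `Aut(D)` trivially. -/
lemma fund_inter {η : V ≃ᵃⁱ[ℝ] V} (hη : η ∈ fundGroup Φ α α₀) {g : V ≃ₗᵢ[ℝ] V}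
    (hg : ⇑g '' Set.range α = Set.range α) (h : η = g.toAffineIsometryEquiv) : g = 1 := by
  have hw := ((mem_fund hΦ hα h₀ hω).1 hη).2
  rw [h, lin_linear] at hw
  refine eq_one_of_pos hΦ hα hω hw fun i => ?_
  rw [← diag_height hα hω hg, g.inner_map_map, height_simple hω]
  exact one_pos

end Alcove

end AlcoveAut

theorem statement_15
    {V : Type*} [NormedAddCommGroup V] [InnerProductSpace ℝ V] [FiniteDimensional ℝ V]
    (Φ : Set V) (hΦ : IsRootSystem Φ)
    {n : ℕ} (α : Fin n → V) (hα : IsBase Φ α)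
    (m : Fin n → ℕ) (α₀ : V) (h₀ : IsHighestRoot Φ α m α₀)
    (AutA : Set (V ≃ᵃⁱ[ℝ] V))
    (hAutA : AutA = {ζ : V ≃ᵃⁱ[ℝ] V | ⇑ζ '' alcove α α₀ = alcove α α₀}) :
    -- `Ω` is a normal subgroup of `Aut(A)`:
    (fundGroup Φ α α₀ ⊆ AutA) ∧
    (∀ ζ ∈ AutA, ∀ ω ∈ fundGroup Φ α α₀, ζ * ω * ζ⁻¹ ∈ fundGroup Φ α α₀) ∧
    -- `Ω ∩ Aut(D) = {1}`:
    (∀ ω ∈ fundGroup Φ α α₀, ∀ φ : V ≃ₗᵢ[ℝ] V,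
      ⇑φ '' Set.range α = Set.range α → ω = φ.toAffineIsometryEquiv → ω = 1) ∧
    -- every element of `Aut(A)` is uniquely `ω ∘ φ` with `ω ∈ Ω`, `φ ∈ Aut(D)`:
    (∀ ζ ∈ AutA, ∃! p : (V ≃ᵃⁱ[ℝ] V) × (V ≃ₗᵢ[ℝ] V),
      p.1 ∈ fundGroup Φ α α₀ ∧ ⇑p.2 '' Set.range α = Set.range α ∧
      ζ = p.1 * p.2.toAffineIsometryEquiv) := by
  classical
  obtain ⟨ω, hω⟩ := AlcoveAut.exists_dual hα
  have hmem : ∀ {ζ : V ≃ᵃⁱ[ℝ] V}, ζ ∈ AutA ↔ ζ ∈ AlcoveAut.alcAut α α₀ := fun {ζ} => by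
    rw [AlcoveAut.mem_alcAut, hAutA]; rfl
  have hfund : ∀ {ζ : V ≃ᵃⁱ[ℝ] V}, ζ ∈ fundGroup Φ α α₀ ↔
      ζ ∈ AlcoveAut.alcAut α α₀ ∧ AlcoveAut.lin ζ ∈ WeylGroup Φ :=
    AlcoveAut.mem_fund hΦ hα h₀ hω
  have hone : (1 : V ≃ₗᵢ[ℝ] V).toAffineIsometryEquiv = 1 := rfl
  have hmul : ∀ g h : V ≃ₗᵢ[ℝ] V, (g * h).toAffineIsometryEquiv =
    g.toAffineIsometryEquiv * h.toAffineIsometryEquiv := fun _ _ => rfl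
  have hinv : ∀ g : V ≃ₗᵢ[ℝ] V, g⁻¹.toAffineIsometryEquiv = g.toAffineIsometryEquiv⁻¹ :=
    fun g => eq_inv_of_mul_eq_one_left (by rw [← hmul, inv_mul_cancel, hone])
  have himg : ∀ g : V ≃ₗᵢ[ℝ] V, ⇑g '' Set.range α = Set.range α →
      ⇑g⁻¹ '' Set.range α = Set.range α := fun g hg => by
    conv_lhs => rw [← hg]
    rw [← Set.image_comp, ← LinearIsometryEquiv.coe_mul, inv_mul_cancel]
    simp
  refine ⟨fun ζ hζ => hmem.2 (hfund.1 hζ).1, fun ζ hζ η hη => ?_, fun η hη g hg h => ?_,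
    fun ζ hζ => ?_⟩
  · rw [hmem] at hζ
    rw [hfund] at hη ⊢
    refine ⟨mul_mem (mul_mem hζ hη.1) (inv_mem hζ), ?_⟩
    rw [map_mul, map_mul, map_inv]
    exact AlcoveAut.weyl_normal (AlcoveAut.lin_mem_rootStab hΦ hα h₀ hω hζ) hη.2
  · rw [h, AlcoveAut.fund_inter hΦ hα h₀ hω hη hg h, hone]
  · rw [hmem] at hζ
    have hst := AlcoveAut.lin_mem_rootStab hΦ hα h₀ hω hζ
    obtain ⟨w, hw, hg⟩ := AlcoveAut.exists_weyl hΦ hα hω hst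
    have hgst : w * AlcoveAut.lin ζ ∈ AlcoveAut.rootStab Φ :=
      mul_mem (AlcoveAut.weyl_le hΦ hw) hst
    have hη₀ : ζ * ((w * AlcoveAut.lin ζ).toAffineIsometryEquiv)⁻¹ ∈ fundGroup Φ α α₀ := by
      refine hfund.2 ⟨mul_mem hζ (inv_mem (AlcoveAut.diag_mem hα h₀ hω hg hgst)), ?_⟩
      rw [map_mul, map_inv, AlcoveAut.lin_linear, mul_inv_rev, mul_inv_cancel_left]
      exact inv_mem hw
    generalize w * AlcoveAut.lin ζ = g at hg hη₀
    refine ⟨(ζ * (g.toAffineIsometryEquiv)⁻¹, g), ⟨hη₀, hg, by simp⟩, ?_⟩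
    rintro ⟨η, f⟩ ⟨hη, hf, heq⟩
    simp only at hη hf heq
    have hquot : η⁻¹ * (ζ * (g.toAffineIsometryEquiv)⁻¹) ∈ fundGroup Φ α α₀ := by
      rw [hfund] at hη hη₀ ⊢
      refine ⟨mul_mem (inv_mem hη.1) hη₀.1, ?_⟩
      rw [map_mul, map_inv]
      exact mul_mem (inv_mem hη.2) hη₀.2
    have hfg : f * g⁻¹ = 1 := by
      refine AlcoveAut.fund_inter hΦ hα h₀ hω hquot ?_ ?_
      · rw [LinearIsometryEquiv.coe_mul, Set.image_comp, himg g hg, hf]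
      · rw [hmul, hinv, heq]
        group
    obtain rfl : f = g := mul_inv_eq_one.1 hfg
    rw [heq, mul_inv_cancel_right]
end

section
/- Let φ₀ ∈ Aut(D) be an involution inducing the permutation π of indices via φ₀(αᵢ) = α_{π(i)}, let J = {j : m_j = 1}, and let v₀ = Σ_{i∈J₀⁺} αᵢ − Σ_{i∈J₀⁻} αᵢ be a balanced minuscule root for φ₀, i.e., J₀⁺ and J₀⁻ are disjoint subsets of J with J₀⁺ ∪ J₀⁻ nonempty and π(J₀⁺) = J₀⁻. Set L = {x ∈ K : (v₀, x) ≥ 0}. Then the set of extreme points of L equals L intersected with the set of extreme points of K; explicitly, the extreme points of L are the points ϖᵢ^∨/mᵢ for i ∉ J together with the points (1/(|S|+1)) Σ_{j∈S} ϖ_j^∨ for subsets S ⊆ J satisfying |S ∩ J₀⁺| ≥ |S ∩ J₀⁻|. -/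
/-!
In the coordinates `tᵢ = (αᵢ, x)` (dual to the basis `ϖ`) put `T = (α₀, x) = ∑ mᵢ tᵢ` and let
`s = 1 - T` be the slack.  Then `K` is given by `tᵢ ≥ 0`, `s ≥ 0` and `t_j ≤ s` for `j ∈ J`, where
`s + ∑ mᵢ tᵢ = 1`: it is a slice of the product of the cone over the cube `[0,1]^J` with the rays
`ϖᵢ`, `i ∉ J`.  The extra inequality `N = (v₀, x) ≥ 0` has all coefficients in `{-1, 0, 1}` and only
involves `J`, so it creates no new vertices: at a vertex with `N = 0`, a single fractional coordinate
`0 < t_j < s` would be an integer multiple of `s`.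

Writing `E` for the explicit set, the proof is the chain of inclusions
`ext L ⊆ E ⊆ L ∩ ext K ⊆ ext L`.  The last one is general.  For the second, at each point of `E`
the tight constraints of `K` have a unique common solution
(`coweight_mem_extremePoints`, `cube_mem_extremePoints`).  For the first, a point of `L` that is
extreme admits no nonzero direction along which the tight constraints stay tight (`dir_eq_zero`).
* If `tᵢ > 0` for some `i ∉ J`, the direction `x - ϖᵢ/mᵢ` keeps them tight, so `x = ϖᵢ/mᵢ`.
* If `tᵢ = 0` off `J` and `e` is supported on the fractional coordinates with `N(e) = 0` or `N > 0`,
  the direction `e - (∑ eⱼ) x` keeps them tight, so `e = 0`. Hence no coordinate is fractional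
  and `x` is `s ∑_{j ∈ S} ϖ_j` with `s (|S| + 1) = 1` (`extreme_eq_cube`).
-/

open scoped RealInnerProductSpace

open scoped RealInnerProductSpace

/-! ### Tight constraints and extreme points -/

section Helpers

variable {V : Type*} [NormedAddCommGroup V] [InnerProductSpace ℝ V]

open Filter Topology in
lemma eventually_nonneg {g c : ℝ} (hg : 0 ≤ g) (h : g = 0 → c = 0) :
    ∀ᶠ ε : ℝ in 𝓝 0, 0 ≤ g + ε * c := by
  rcases hg.eq_or_lt with h0 | h0
  · simp [← h0, h h0.symm]
  · have : Tendsto (fun ε : ℝ => g + ε * c) (𝓝 0) (𝓝 (g + 0 * c)) :=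
      (Continuous.tendsto (by fun_prop) 0)
    rw [zero_mul, add_zero] at this
    exact (this.eventually (lt_mem_nhds h0)).mono fun _ h => h.le

/-- An extreme point stays put when moved both ways along a segment inside the set. -/
lemma extreme_dir {L : Set V} {x d : V} (hx : x ∈ Set.extremePoints ℝ L)
    (h1 : x + d ∈ L) (h2 : x - d ∈ L) : d = 0 := by
  have h : x + d = x := hx.2 h1 h2 ⟨1/2, 1/2, by norm_num, by norm_num, by norm_num, by module⟩
  simpa using h

/-- An extreme point of `L` admits no nonzero direction along which every constraint that is
tight at the point stays tight. -/
lemma dir_eq_zero {n : ℕ} {α : Fin n → V} {m : Fin n → ℕ} {α₀ v₀ : V} {x d : V}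
    (hx : x ∈ Set.extremePoints ℝ {x ∈ kpPolytope α m α₀ | 0 ≤ ⟪v₀, x⟫})
    (h1 : ∀ i, ⟪α i, x⟫ = 0 → ⟪α i, d⟫ = 0)
    (h2 : ⟪α₀, x⟫ = 1 → ⟪α₀, d⟫ = 0)
    (h3 : ∀ j, m j = 1 → ⟪α₀, x⟫ + ⟪α j, x⟫ = 1 → ⟪α₀, d⟫ + ⟪α j, d⟫ = 0)
    (h4 : ⟪v₀, x⟫ = 0 → ⟪v₀, d⟫ = 0) : d = 0 := by
  obtain ⟨⟨⟨hx1, hx2⟩, hx3⟩, hx4⟩ := hx.1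
  have key : ∀ᶠ ε : ℝ in nhds 0,
      x + ε • d ∈ {x ∈ kpPolytope α m α₀ | 0 ≤ ⟪v₀, x⟫} := by
    have e1 : ∀ᶠ ε : ℝ in nhds 0, ∀ i, 0 ≤ ⟪α i, x⟫ + ε * ⟪α i, d⟫ :=
      Filter.eventually_all.2 fun i => eventually_nonneg (hx1 i) (h1 i)
    have e2 : ∀ᶠ ε : ℝ in nhds 0, 0 ≤ (1 - ⟪α₀, x⟫) + ε * (-⟪α₀, d⟫) :=
      eventually_nonneg (by linarith) fun h => by rw [h2 (by linarith), neg_zero]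
    have e3 : ∀ᶠ ε : ℝ in nhds 0, ∀ j, m j = 1 →
        0 ≤ (1 - (⟪α₀, x⟫ + ⟪α j, x⟫)) + ε * (-(⟪α₀, d⟫ + ⟪α j, d⟫)) := by
      refine Filter.eventually_all.2 fun j => ?_
      by_cases hj : m j = 1
      · have := hx3 j hj
        rw [inner_add_left] at this
        refine (eventually_nonneg (by linarith) fun h => ?_).mono fun _ h _ => h
        rw [h3 j hj (by linarith), neg_zero]
      · exact Filter.Eventually.of_forall fun _ h => absurd h hj
    have e4 := eventually_nonneg hx4 h4
    filter_upwards [e1, e2, e3, e4] with ε f1 f2 f3 f4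
    refine ⟨⟨⟨fun i => ?_, ?_⟩, fun j hj => ?_⟩, ?_⟩
    · simpa [inner_add_right, inner_smul_right] using f1 i
    · simp only [inner_add_right, inner_smul_right]; linarith
    · have := f3 j hj
      simp only [inner_add_left, inner_add_right, inner_smul_right]; linarith
    · simpa [inner_add_right, inner_smul_right] using f4
  obtain ⟨r, hr, hb⟩ := Metric.eventually_nhds_iff.1 key
  have p1 := hb (y := r / 2) (by simp [abs_of_pos hr, hr])
  have p2 := hb (y := -(r / 2)) (by simp [abs_of_pos hr, hr])
  rw [neg_smul, ← sub_eq_add_neg] at p2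
  exact (smul_eq_zero.1 (extreme_dir hx p1 p2)).resolve_left (by positivity)

lemma eq_of_coord {n : ℕ} {α : Fin n → V} (hs : Submodule.span ℝ (Set.range α) = ⊤) {x y : V}
    (h : ∀ i, ⟪α i, x⟫ = ⟪α i, y⟫) : x = y := by
  refine ext_inner_left ℝ fun v => ?_
  have hv : v ∈ Submodule.span ℝ (Set.range α) := hs ▸ Submodule.mem_top
  induction hv using Submodule.span_induction with
  | mem v hv => obtain ⟨i, rfl⟩ := hv; exact h i
  | zero => simp
  | add a b _ _ ha hb => rw [inner_add_left, inner_add_left, ha, hb]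
  | smul c a _ ha => rw [real_inner_smul_left, real_inner_smul_left, ha]

/-- If an upper bound `(v, ·) ≤ c` valid on a set is attained at an interior point of a segment in
the set, it is attained at the first endpoint. -/
lemma tight {y z x v : V} {c : ℝ} (hx : x ∈ openSegment ℝ y z) (hy : ⟪v, y⟫ ≤ c)
    (hz : ⟪v, z⟫ ≤ c) (h : ⟪v, x⟫ = c) : ⟪v, y⟫ = c := by
  obtain ⟨a, b, ha, hb, hab, rfl⟩ := hx
  rw [inner_add_right, inner_smul_right, inner_smul_right] at h
  refine le_antisymm hy ?_
  have hb' : b = 1 - a := by linarith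
  subst hb'
  nlinarith

lemma tight_zero {y z x v : V} (hx : x ∈ openSegment ℝ y z) (hy : 0 ≤ ⟪v, y⟫)
    (hz : 0 ≤ ⟪v, z⟫) (h : ⟪v, x⟫ = 0) : ⟪v, y⟫ = 0 := by
  have := tight (v := -v) (c := 0) hx (by simpa using hy) (by simpa using hz) (by simpa using h)
  simpa using this

/-! ### Coordinates of the candidate vertices -/

variable {n : ℕ} {α : Fin n → V} {m : Fin n → ℕ} {α₀ : V} {ϖ : Fin n → V}

lemma coord_sum (hϖ : ∀ i j, ⟪ϖ i, α j⟫ = if i = j then (1 : ℝ) else 0) (e : Fin n → ℝ)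
    (i : Fin n) : ⟪α i, ∑ j, e j • ϖ j⟫ = e i := by
  rw [inner_sum, Finset.sum_eq_single i]
  · rw [inner_smul_right, real_inner_comm, hϖ]; simp
  · intro j _ hj; rw [inner_smul_right, real_inner_comm, hϖ]; simp [hj]
  · simp

lemma high_eq (h : α₀ = ∑ i, (m i : ℝ) • α i) (x : V) :
    ⟪α₀, x⟫ = ∑ i, (m i : ℝ) * ⟪α i, x⟫ := by
  rw [h, sum_inner]; simp [real_inner_smul_left]

lemma coord_coweight (hϖ : ∀ i j, ⟪ϖ i, α j⟫ = if i = j then (1 : ℝ) else 0) (i k : Fin n) :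
    ⟪α k, (m i : ℝ)⁻¹ • ϖ i⟫ = if k = i then (m i : ℝ)⁻¹ else 0 := by
  rw [inner_smul_right, real_inner_comm, hϖ]; simp [eq_comm]

lemma high_coweight (hϖ : ∀ i j, ⟪ϖ i, α j⟫ = if i = j then (1 : ℝ) else 0)
    (hpos : ∀ i, 0 < m i) (h : α₀ = ∑ i, (m i : ℝ) • α i) (i : Fin n) :
    ⟪α₀, (m i : ℝ)⁻¹ • ϖ i⟫ = 1 := by
  have : (m i : ℝ) ≠ 0 := by exact_mod_cast (hpos i).ne'
  simp [high_eq h, coord_coweight hϖ, this]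

lemma coord_cube (hϖ : ∀ i j, ⟪ϖ i, α j⟫ = if i = j then (1 : ℝ) else 0) (S : Finset (Fin n))
    (k : Fin n) :
    ⟪α k, ((S.card : ℝ) + 1)⁻¹ • ∑ j ∈ S, ϖ j⟫ = if k ∈ S then ((S.card : ℝ) + 1)⁻¹ else 0 := by
  have : ∀ j, ⟪α k, ϖ j⟫ = if j = k then (1 : ℝ) else 0 := fun j => by
    rw [real_inner_comm, hϖ]
  simp [inner_smul_right, inner_sum, this]

lemma high_of_support (h : α₀ = ∑ i, (m i : ℝ) • α i) {S : Finset (Fin n)}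
    (hS : ∀ j ∈ S, m j = 1) {x : V} {s : ℝ}
    (h1 : ∀ j ∈ S, ⟪α j, x⟫ = s) (h0 : ∀ j ∉ S, ⟪α j, x⟫ = 0) : ⟪α₀, x⟫ = S.card * s := by
  rw [high_eq h, ← Finset.sum_subset (Finset.subset_univ S)]
  · rw [Finset.sum_congr rfl (g := fun _ => s) fun j hj => by rw [h1 j hj, hS j hj]; simp]
    simp
  · intro j _ hj; rw [h0 j hj, mul_zero]

/-! ### Extreme points of the Komrakov–Premet polytope -/

lemma coweight_mem_extremePoints (hϖ : ∀ i j, ⟪ϖ i, α j⟫ = if i = j then (1 : ℝ) else 0)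
    (hs : Submodule.span ℝ (Set.range α) = ⊤)
    (hpos : ∀ i, 0 < m i) (h : α₀ = ∑ i, (m i : ℝ) • α i) (i : Fin n) (hi : m i ≠ 1) :
    (m i : ℝ)⁻¹ • ϖ i ∈ Set.extremePoints ℝ (kpPolytope α m α₀) := by
  have hm : (m i : ℝ) ≠ 0 := by exact_mod_cast (hpos i).ne'
  have hT := high_coweight hϖ hpos h i
  have hc := coord_coweight (m := m) hϖ i
  refine ⟨⟨⟨fun k => ?_, hT.le⟩, fun j hj => ?_⟩, ?_⟩
  · rw [hc]; split_ifs <;> positivity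
  · have hji : j ≠ i := by rintro rfl; exact hi hj
    rw [inner_add_left, hT, hc, if_neg hji, add_zero]
  · rintro y hy z hz hx
    have c0 : ∀ k, k ≠ i → ⟪α k, y⟫ = 0 := fun k hk =>
      tight_zero hx (hy.1.1 k) (hz.1.1 k) (by rw [hc, if_neg hk])
    have cT : ⟪α₀, y⟫ = 1 := tight hx hy.1.2 hz.1.2 hT
    rw [high_eq h, Finset.sum_eq_single i (fun k _ hk => by rw [c0 k hk, mul_zero])
      (by simp)] at cT
    refine eq_of_coord hs fun k => ?_
    rw [hc]
    split_ifs with hk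
    · subst hk; field_simp; linarith
    · exact c0 k hk

lemma cube_mem_extremePoints (hϖ : ∀ i j, ⟪ϖ i, α j⟫ = if i = j then (1 : ℝ) else 0)
    (hs : Submodule.span ℝ (Set.range α) = ⊤)
    (h : α₀ = ∑ i, (m i : ℝ) • α i) (S : Finset (Fin n))
    (hS : ∀ j ∈ S, m j = 1) :
    ((S.card : ℝ) + 1)⁻¹ • ∑ j ∈ S, ϖ j ∈ Set.extremePoints ℝ (kpPolytope α m α₀) := by
  have hc := coord_cube hϖ S
  have hT := high_of_support (x := ((S.card : ℝ) + 1)⁻¹ • ∑ j ∈ S, ϖ j) h hS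
    (fun j hj => by rw [hc, if_pos hj]) (fun j hj => by rw [hc, if_neg hj])
  have hT1 : (S.card : ℝ) * ((S.card : ℝ) + 1)⁻¹ + ((S.card : ℝ) + 1)⁻¹ = 1 := by field_simp
  have hinv : 0 < ((S.card : ℝ) + 1)⁻¹ := by positivity
  refine ⟨⟨⟨fun k => ?_, ?_⟩, fun j hj => ?_⟩, ?_⟩
  · rw [hc]; split_ifs <;> positivity
  · rw [hT]; linarith
  · rw [inner_add_left, hT, hc]; split_ifs <;> linarith
  · rintro y hy z hz hx
    have c0 : ∀ k ∉ S, ⟪α k, y⟫ = 0 := fun k hk =>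
      tight_zero hx (hy.1.1 k) (hz.1.1 k) (by rw [hc, if_neg hk])
    have c1 : ∀ k ∈ S, ⟪α k, y⟫ = 1 - ⟪α₀, y⟫ := fun k hk => by
      have := tight hx (hy.2 k (hS k hk)) (hz.2 k (hS k hk))
        (by rw [inner_add_left, hT, hc, if_pos hk, hT1])
      rw [inner_add_left] at this
      linarith
    have cT := high_of_support h hS c1 c0
    refine eq_of_coord hs fun k => ?_
    rw [hc]
    split_ifs with hk
    · rw [c1 k hk]; exact eq_inv_of_mul_eq_one_left (by linear_combination -cT)
    · exact c0 k hk

/-! ### The cube part of the cut polytope -/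

/-- An extreme point of `L` with vanishing coordinates off `J` is a normalised cube vertex. Here
`w` is the coefficient vector of `v₀`. -/
lemma extreme_eq_cube (hϖ : ∀ i j, ⟪ϖ i, α j⟫ = if i = j then (1 : ℝ) else 0)
    (hs : Submodule.span ℝ (Set.range α) = ⊤) (h : α₀ = ∑ i, (m i : ℝ) • α i)
    {w : Fin n → ℤ} (hw : ∀ i, w i = 0 ∨ w i = 1 ∨ w i = -1)
    {v₀ : V} (hv : ∀ x, ⟪v₀, x⟫ = ∑ i, (w i : ℝ) * ⟪α i, x⟫) {x : V}
    (hx : x ∈ Set.extremePoints ℝ {x ∈ kpPolytope α m α₀ | 0 ≤ ⟪v₀, x⟫})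
    (hoff : ∀ i, m i ≠ 1 → ⟪α i, x⟫ = 0) :
    ∃ S : Finset (Fin n), (∀ j ∈ S, m j = 1) ∧ x = ((S.card : ℝ) + 1)⁻¹ • ∑ j ∈ S, ϖ j := by
  obtain ⟨⟨⟨hx1, hx2⟩, hx3⟩, hx4⟩ := hx.1
  simp only [inner_add_left] at hx3
  have hTlt : ⟪α₀, x⟫ < 1 := by
    refine lt_of_le_of_ne hx2 fun hT => ?_
    have : ∀ i, ⟪α i, x⟫ = 0 := fun i => by
      by_cases hi : m i = 1
      · have := hx3 i hi; have := hx1 i; linarith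
      · exact hoff i hi
    rw [high_eq h] at hT
    simp [this] at hT
  -- Vectors supported on the fractional coordinates and compatible with the cut vanish.
  have perturb : ∀ e : Fin n → ℝ,
      (∀ i, e i ≠ 0 → m i = 1 ∧ 0 < ⟪α i, x⟫ ∧ ⟪α i, x⟫ < 1 - ⟪α₀, x⟫) →
      (⟪v₀, x⟫ = 0 → ∑ i, (w i : ℝ) * e i = 0) → e = 0 := by
    intro e he hN
    set y := ∑ j, e j • ϖ j with hy
    have hyc : ∀ i, ⟪α i, y⟫ = e i := coord_sum hϖ e
    set c := ⟪α₀, y⟫ with hc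
    have hd : y - c • x = 0 := by
      refine dir_eq_zero hx (fun i hi => ?_) (fun hT => absurd hT hTlt.ne) (fun j hj hT => ?_)
        (fun hv0 => ?_)
      · have : e i = 0 := by
          by_contra h0; exact (he i h0).2.1.ne' hi
        rw [inner_sub_right, inner_smul_right, hyc, hi, this]; ring
      · have : e j = 0 := by
          by_contra h0; have := (he j h0).2.2; linarith
        rw [inner_sub_right, inner_smul_right, inner_sub_right, inner_smul_right, hyc, this, ← hc]
        linear_combination (-c) * hT
      · rw [inner_sub_right, inner_smul_right, hv0, hv y]
        simp only [hyc, hN hv0]; ring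
    have h1 : ⟪α₀, y - c • x⟫ = 0 := by rw [hd, inner_zero_right]
    rw [inner_sub_right, inner_smul_right, ← hc] at h1
    have hc0 : c = 0 := by
      have : c * (1 - ⟪α₀, x⟫) = 0 := by linarith
      rcases mul_eq_zero.1 this with h | h
      · exact h
      · linarith
    rw [hc0, zero_smul, sub_zero] at hd
    funext i
    rw [← hyc i, hd, inner_zero_right, Pi.zero_apply]
  have hfrac : ∀ j, m j = 1 → ⟪α j, x⟫ = 0 ∨ ⟪α j, x⟫ = 1 - ⟪α₀, x⟫ := by
    intro j hj
    by_contra! hcon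
    have hjF : m j = 1 ∧ 0 < ⟪α j, x⟫ ∧ ⟪α j, x⟫ < 1 - ⟪α₀, x⟫ :=
      ⟨hj, lt_of_le_of_ne (hx1 j) hcon.1.symm,
        lt_of_le_of_ne (by have := hx3 j hj; linarith) hcon.2⟩
    -- The unit vector at `j` is excluded, so the cut is tight and involves `j`.
    have hcut : ⟪v₀, x⟫ = 0 ∧ w j ≠ 0 := by
      by_contra hcut
      have := congrFun (perturb (Pi.single j 1) (fun i hi => ?_) (fun h0 => ?_)) j
      · simp at this
      · rcases eq_or_ne i j with rfl | hij
        · exact hjF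
        · simp [hij] at hi
      · have : w j = 0 := by tauto
        simp [Pi.single_apply, this]
    -- Two fractional coordinates in the cut can be traded against each other.
    have huniq : ∀ k, k ≠ j → w k ≠ 0 →
        ⟪α k, x⟫ = 0 ∨ ⟪α k, x⟫ = 1 - ⟪α₀, x⟫ := by
      intro k hkj hwk
      by_contra! hk
      have hmk : m k = 1 := by
        by_contra h1; exact hk.1 (hoff k h1)
      have hkF : m k = 1 ∧ 0 < ⟪α k, x⟫ ∧ ⟪α k, x⟫ < 1 - ⟪α₀, x⟫ :=
        ⟨hmk, lt_of_le_of_ne (hx1 k) hk.1.symm,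
          lt_of_le_of_ne (by have := hx3 k hmk; linarith) hk.2⟩
      have := congrFun (perturb (Pi.single j (w k : ℝ) - Pi.single k (w j : ℝ))
        (fun i hi => ?_) (fun _ => ?_)) j
      · simp [hkj.symm, hwk] at this
      · rcases eq_or_ne i j with rfl | hij
        · exact hjF
        · rcases eq_or_ne i k with rfl | hik
          · exact hkF
          · simp [hij, hik] at hi
      · simp [Pi.single_apply, mul_sub, Finset.sum_sub_distrib, mul_comm]
    -- Solving the tight cut for the coordinate `j` gives an integer multiple of the slack.
    have hint : ∀ k, ∃ z : ℤ, k ≠ j → (w k : ℝ) * ⟪α k, x⟫ = z * (1 - ⟪α₀, x⟫) := by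
      intro k
      by_cases hwk : w k = 0
      · exact ⟨0, fun _ => by simp [hwk]⟩
      · by_cases hkj : k = j
        · exact ⟨0, fun h => absurd hkj h⟩
        · rcases huniq k hkj hwk with h0 | h0
          · exact ⟨0, fun _ => by simp [h0]⟩
          · exact ⟨w k, fun _ => by rw [h0]⟩
    choose z hz using hint
    have hsum := hcut.1
    rw [hv, ← Finset.add_sum_erase _ _ (Finset.mem_univ j),
      Finset.sum_congr rfl fun k hk => hz k (Finset.ne_of_mem_erase hk), ← Finset.sum_mul,
      ← Int.cast_sum] at hsum
    generalize ∑ k ∈ Finset.univ.erase j, z k = Z at hsum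
    obtain ⟨u, hu⟩ : ∃ u : ℤ, ⟪α j, x⟫ = u * (1 - ⟪α₀, x⟫) := by
      rcases hw j with h0 | h0 | h0
      · exact absurd h0 hcut.2
      · refine ⟨-Z, ?_⟩
        rw [h0] at hsum; push_cast at hsum ⊢; linarith
      · refine ⟨Z, ?_⟩
        rw [h0] at hsum; push_cast at hsum ⊢; linarith
    have hspos : 0 < 1 - ⟪α₀, x⟫ := by linarith
    have hu0 : (0 : ℝ) < u := by
      have := hjF.2.1; rw [hu] at this
      exact pos_of_mul_pos_left this hspos.le
    have hu1 : (u : ℝ) < 1 := by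
      have := hjF.2.2; rw [hu] at this
      nlinarith
    have : 0 < u := by exact_mod_cast hu0
    have : u < 1 := by exact_mod_cast hu1
    omega
  classical
  refine ⟨Finset.univ.filter fun j => ⟪α j, x⟫ ≠ 0, fun j hj => ?_, ?_⟩
  · by_contra h1; exact (Finset.mem_filter.1 hj).2 (hoff j h1)
  · set S := Finset.univ.filter fun j => ⟪α j, x⟫ ≠ 0 with hSdef
    have hS : ∀ j ∈ S, m j = 1 := fun j hj => by
      by_contra h1; exact (Finset.mem_filter.1 hj).2 (hoff j h1)
    have c0 : ∀ j ∉ S, ⟪α j, x⟫ = 0 := fun j hj => by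
      by_contra h1; exact hj (Finset.mem_filter.2 ⟨Finset.mem_univ _, h1⟩)
    have c1 : ∀ j ∈ S, ⟪α j, x⟫ = 1 - ⟪α₀, x⟫ := fun j hj =>
      (hfrac j (hS j hj)).resolve_left (Finset.mem_filter.1 hj).2
    have cT := high_of_support h hS c1 c0
    refine eq_of_coord hs fun k => ?_
    rw [coord_cube hϖ]
    split_ifs with hk
    · rw [c1 k hk]; exact eq_inv_of_mul_eq_one_left (by linear_combination -cT)
    · exact c0 k hk

end Helpers

theorem statement_18
    {V : Type*} [NormedAddCommGroup V] [InnerProductSpace ℝ V] [FiniteDimensional ℝ V]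
    (Φ : Set V) (hΦ : IsRootSystem Φ)
    {n : ℕ} (α : Fin n → V) (hα : IsBase Φ α)
    (m : Fin n → ℕ) (α₀ : V) (h₀ : IsHighestRoot Φ α m α₀)
    (ϖ : Fin n → V) (hϖ : ∀ i j, ⟪ϖ i, α j⟫ = if i = j then 1 else 0)
    (φ₀ : V ≃ₗᵢ[ℝ] V) (hφ₀inv : ∀ x, φ₀ (φ₀ x) = x)
    (π : Equiv.Perm (Fin n)) (hπ : ∀ i, φ₀ (α i) = α (π i))
    (J₀p J₀m : Finset (Fin n))
    (hJ₀p : ∀ i ∈ J₀p, m i = 1) (hJ₀m : ∀ i ∈ J₀m, m i = 1)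
    (hdisj : Disjoint J₀p J₀m) (hne : (J₀p ∪ J₀m).Nonempty)
    (hbal : J₀p.image ⇑π = J₀m)
    (v₀ : V) (hv₀ : v₀ = ∑ i ∈ J₀p, α i - ∑ i ∈ J₀m, α i)
    (L : Set V) (hL : L = {x ∈ kpPolytope α m α₀ | 0 ≤ ⟪v₀, x⟫}) :
    Set.extremePoints ℝ L = L ∩ Set.extremePoints ℝ (kpPolytope α m α₀) ∧
    Set.extremePoints ℝ L =
      {x : V | ∃ i, m i ≠ 1 ∧ x = ((m i : ℝ))⁻¹ • ϖ i} ∪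
      {x : V | ∃ S : Finset (Fin n), (∀ j ∈ S, m j = 1) ∧
        (S ∩ J₀m).card ≤ (S ∩ J₀p).card ∧
        x = ((S.card : ℝ) + 1)⁻¹ • ∑ j ∈ S, ϖ j} := by
  classical
  have hs := hα.spans
  have heq := h₀.eq
  set w : Fin n → ℤ := fun i => (if i ∈ J₀p then 1 else 0) - (if i ∈ J₀m then 1 else 0) with hwdef
  have hw : ∀ i, w i = 0 ∨ w i = 1 ∨ w i = -1 := fun i => by
    simp only [hwdef]; split_ifs <;> simp
  have hwJ : ∀ i, m i ≠ 1 → w i = 0 := fun i hi => by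
    have h1 : i ∉ J₀p := fun h => hi (hJ₀p i h)
    have h2 : i ∉ J₀m := fun h => hi (hJ₀m i h)
    simp [hwdef, h1, h2]
  have hv : ∀ x, ⟪v₀, x⟫ = ∑ i, (w i : ℝ) * ⟪α i, x⟫ := fun x => by
    simp [hv₀, hwdef, inner_sub_left, sum_inner, sub_mul, Finset.sum_sub_distrib]
  have hvcw : ∀ i, m i ≠ 1 → ⟪v₀, (m i : ℝ)⁻¹ • ϖ i⟫ = 0 := fun i hi => by
    rw [hv]
    refine Finset.sum_eq_zero fun k _ => ?_
    rw [coord_coweight hϖ]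
    split_ifs with hk
    · rw [hk, hwJ i hi]; simp
    · simp
  have hvcube : ∀ S : Finset (Fin n), ⟪v₀, ((S.card : ℝ) + 1)⁻¹ • ∑ j ∈ S, ϖ j⟫ =
      ((S.card : ℝ) + 1)⁻¹ * (((S ∩ J₀p).card : ℝ) - (S ∩ J₀m).card) := fun S => by
    simp only [hv₀, inner_sub_left, sum_inner, coord_cube hϖ, Finset.sum_ite_mem,
      Finset.sum_const, nsmul_eq_mul, Finset.inter_comm _ S]
    ring
  have hcut : ∀ S : Finset (Fin n), 0 ≤ ⟪v₀, ((S.card : ℝ) + 1)⁻¹ • ∑ j ∈ S, ϖ j⟫ ↔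
      (S ∩ J₀m).card ≤ (S ∩ J₀p).card := fun S => by
    have hp : (0 : ℝ) < ((S.card : ℝ) + 1)⁻¹ := by positivity
    rw [hvcube, mul_nonneg_iff_of_pos_left hp, sub_nonneg, Nat.cast_le]
  set E : Set V := {x : V | ∃ i, m i ≠ 1 ∧ x = ((m i : ℝ))⁻¹ • ϖ i} ∪
      {x : V | ∃ S : Finset (Fin n), (∀ j ∈ S, m j = 1) ∧
        (S ∩ J₀m).card ≤ (S ∩ J₀p).card ∧
        x = ((S.card : ℝ) + 1)⁻¹ • ∑ j ∈ S, ϖ j} with hE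
  have s1 : Set.extremePoints ℝ L ⊆ E := by
    intro x hx
    rw [hL] at hx
    have hxL := hx.1
    by_cases hoff : ∀ i, m i ≠ 1 → ⟪α i, x⟫ = 0
    · obtain ⟨S, hS, rfl⟩ := extreme_eq_cube hϖ hs heq hw hv hx hoff
      exact Or.inr ⟨S, hS, (hcut S).1 hxL.2, rfl⟩
    · push Not at hoff
      obtain ⟨i, hi, hti⟩ := hoff
      have hc := coord_coweight (m := m) hϖ i
      refine Or.inl ⟨i, hi, sub_eq_zero.1 (dir_eq_zero hx (fun k hk => ?_) (fun hT => ?_)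
        (fun j hj hT => ?_) (fun h0 => ?_))⟩
      · have hki : k ≠ i := by rintro rfl; exact hti hk
        rw [inner_sub_right, hc, if_neg hki, hk, sub_zero]
      · rw [inner_sub_right, high_coweight hϖ h₀.pos heq, hT, sub_self]
      · have hji : j ≠ i := by rintro rfl; exact hi hj
        rw [inner_sub_right, inner_sub_right, high_coweight hϖ h₀.pos heq, hc, if_neg hji]
        linarith
      · rw [inner_sub_right, h0, hvcw i hi, sub_zero]
  have s2 : E ⊆ L ∩ Set.extremePoints ℝ (kpPolytope α m α₀) := by
    rw [hL]
    rintro x (⟨i, hi, rfl⟩ | ⟨S, hS, hSc, rfl⟩)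
    · have := coweight_mem_extremePoints hϖ hs h₀.pos heq i hi
      exact ⟨⟨this.1, (hvcw i hi).ge⟩, this⟩
    · have := cube_mem_extremePoints hϖ hs heq S hS
      exact ⟨⟨this.1, (hcut S).2 hSc⟩, this⟩
  have s3 : L ∩ Set.extremePoints ℝ (kpPolytope α m α₀) ⊆ Set.extremePoints ℝ L :=
    inter_extremePoints_subset_extremePoints_of_subset (by rw [hL]; exact fun x hx => hx.1)
  exact ⟨(s1.trans s2).antisymm s3, s1.antisymm (s2.trans s3)⟩
end
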